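/- The function R ↦ λ₁(Γ_R) is strictly increasing on (0,∞): for 0 < R < R' one has λ₁(Γ_R) < λ₁(Γ_{R'}). -/

import Mathlib

/-!
Suppose `0 < R < L` and `λ₁(Γ_L) ≤ λ₁(Γ_R)`, and write `λ = λ₁(Γ_L)`. The argument works with
near-minimizers on `Γ_L`, so that neither existence nor regularity of eigenfunctions is needed.

* `exists_quotient_lt`: an explicit trial function shows `λ < π²`.
* `arms_poincare`: on the part of the arms between `R` and `L` every cross-section has first
  Dirichlet eigenvalue `π²`. Combined with `λ ≤ λ₁(Γ_R)` and the spectral gap `π² - λ > 0`, this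
  forces a normalized function `u` on `Γ_L` with energy at most `λ + ε` to have all of its mass,
  up to `O(ε)`, in `Γ_R`.
* `exists_near_min`: near-minimizers may be taken nonnegative.
* `exists_test`: there is an admissible `φ = G(x₁) G(x₂)` on `Γ_L`, with Neumann condition at the
  ends, for which `f = -Δφ - λ φ` is positive almost everywhere on `Γ_R`: in the corner `φ > 0`
  and `-Δφ = 2π² φ`, and in the arms `φ < 0` and `-Δφ = -3π² φ`. Since the energy excess of
  `u - s φ` is nonnegative for all `s > 0` and that of `u` is at most `ε`, the integral of `f u`
  over `Γ_L` is small. The part of this integral outside `Γ_R` is small because the mass there is,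
  so the integral of `f u` over `Γ_R` is small.
* `GamR_fourth`: a Ladyzhenskaya-type inequality bounds the integral of `u⁴`. As `u ≥ 0` and
  `f > 0`, `sq_integral_le_split` then makes the mass of `u` in `Γ_R` less than `3/4`, which
  contradicts the concentration of the mass there.
-/

noncomputable section
open MeasureTheory Set Real

/-- The interval `I = (-1,0)`. -/
def II : Set ℝ := Set.Ioo (-1) 0

/-- The broken guide `Γ = {x ∈ ℝ² : -1 < min(x₁,x₂) < 0}`. -/
def Gam : Set (ℝ × ℝ) := {p | -1 < min p.1 p.2 ∧ min p.1 p.2 < 0}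

/-- The box `□_L = {x : max(|x₁+1|,|x₂+1|) < L}`. -/
def Box (L : ℝ) : Set (ℝ × ℝ) := {p | |p.1 + 1| < L ∧ |p.2 + 1| < L}

/-- The finite guide `Γ_R = Γ ∩ □_{R+1}`. -/
def GamR (R : ℝ) : Set (ℝ × ℝ) := Gam ∩ Box (R + 1)

/-- The Neumann part `Σ_R = ∂Γ_R ∩ ∂□_{R+1}` of the boundary. -/
def Sig (R : ℝ) : Set (ℝ × ℝ) := frontier (GamR R) ∩ frontier (Box (R + 1))

/-- The Dirichlet part `∂Γ_R ∖ Σ_R` of the boundary. -/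
def DirB (R : ℝ) : Set (ℝ × ℝ) := frontier (GamR R) \ Sig R

/-- Squared gradient `|∇u|² = (∂₁u)² + (∂₂u)²`. -/
def gradSq2 (u : ℝ × ℝ → ℝ) (p : ℝ × ℝ) : ℝ :=
  (fderiv ℝ u p (1, 0)) ^ 2 + (fderiv ℝ u p (0, 1)) ^ 2

/-- Admissible functions for the mixed problem on `Γ_R`: `C¹` up to the boundary
(modelled by a globally `C¹` extension) vanishing on the Dirichlet part. -/
def AdmR (R : ℝ) (u : ℝ × ℝ → ℝ) : Prop :=
  ContDiff ℝ 1 u ∧ ∀ p ∈ DirB R, u p = 0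

/-- First Rayleigh quotient `λ₁(Γ_R)` of the mixed Dirichlet–Neumann Laplacian on `Γ_R`. -/
def lamR (R : ℝ) : ℝ :=
  sInf {r | ∃ u : ℝ × ℝ → ℝ, AdmR R u ∧ (∫ p in GamR R, (u p) ^ 2) ≠ 0 ∧
    r = (∫ p in GamR R, gradSq2 u p) / ∫ p in GamR R, (u p) ^ 2}

/-- First Rayleigh quotient `λ₁(Γ)` of the Dirichlet Laplacian on the broken guide `Γ`. -/
def lamG : ℝ :=
  sInf {r | ∃ u : ℝ × ℝ → ℝ, ContDiff ℝ 1 u ∧ HasCompactSupport u ∧ tsupport u ⊆ Gam ∧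
    (∫ p in Gam, (u p) ^ 2) ≠ 0 ∧
    r = (∫ p in Gam, gradSq2 u p) / ∫ p in Gam, (u p) ^ 2}

/-- `ω = √(π² − λ₁(Γ))`. -/
def omega : ℝ := Real.sqrt (π ^ 2 - lamG)

/-! ### Geometry of the finite guide -/

lemma mem_GamR {R : ℝ} {p : ℝ × ℝ} :
    p ∈ GamR R ↔ (-1 < p.1 ∧ p.1 < R) ∧ (-1 < p.2 ∧ p.2 < R) ∧ (p.1 < 0 ∨ p.2 < 0) := by
  simp only [GamR, Gam, Box, mem_inter_iff, mem_ofPred_eq, lt_min_iff, min_lt_iff, abs_lt]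
  constructor
  · rintro ⟨⟨⟨h1, h2⟩, h3⟩, ⟨h4, h5⟩, h6, h7⟩
    exact ⟨⟨h1, by linarith⟩, ⟨h2, by linarith⟩, h3⟩
  · rintro ⟨⟨h1, h2⟩, ⟨h3, h4⟩, h5⟩
    exact ⟨⟨⟨h1, h3⟩, h5⟩, ⟨by linarith, by linarith⟩, by linarith, by linarith⟩

lemma isOpen_Gam : IsOpen Gam :=
  (isOpen_lt continuous_const (continuous_fst.min continuous_snd)).inter
    (isOpen_lt (continuous_fst.min continuous_snd) continuous_const)

lemma isOpen_Box (L : ℝ) : IsOpen (Box L) :=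
  (isOpen_lt ((continuous_fst.add continuous_const).abs) continuous_const).inter
    (isOpen_lt ((continuous_snd.add continuous_const).abs) continuous_const)

lemma isOpen_GamR (R : ℝ) : IsOpen (GamR R) := isOpen_Gam.inter (isOpen_Box _)

lemma measurableSet_GamR (R : ℝ) : MeasurableSet (GamR R) := (isOpen_GamR R).measurableSet

lemma GamR_mono {R R' : ℝ} (h : R ≤ R') : GamR R ⊆ GamR R' := by
  intro p hp
  rw [mem_GamR] at hp ⊢
  exact ⟨⟨hp.1.1, by linarith [hp.1.2]⟩, ⟨hp.2.1.1, by linarith [hp.2.1.2]⟩, hp.2.2⟩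

lemma closure_Gam_subset : closure Gam ⊆ {p : ℝ × ℝ | -1 ≤ min p.1 p.2 ∧ min p.1 p.2 ≤ 0} :=
  closure_minimal (fun _ hp => ⟨hp.1.le, hp.2.le⟩)
    ((isClosed_le continuous_const (continuous_fst.min continuous_snd)).inter
      (isClosed_le (continuous_fst.min continuous_snd) continuous_const))

/-- Points with `min x₁ x₂ ∈ [-1, 0]` are limits of points of the guide along the diagonal
direction. -/
lemma mem_closure_Gam {p : ℝ × ℝ} (h : min p.1 p.2 = -1 ∨ min p.1 p.2 = 0) :
    p ∈ closure Gam := by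
  have key : ∀ s : ℝ, (∀ t ∈ Ioo (0:ℝ) 1, (p.1 + s * t, p.2 + s * t) ∈ Gam) →
      p ∈ closure Gam := by
    intro s hs
    have hc : Filter.Tendsto (fun t : ℝ => (p.1 + s * t, p.2 + s * t)) (nhdsWithin 0 (Ioi 0))
        (nhds p) := by
      have : Continuous (fun t : ℝ => (p.1 + s * t, p.2 + s * t)) := by fun_prop
      have h2 := this.tendsto 0
      simp only [mul_zero, add_zero] at h2
      exact h2.mono_left nhdsWithin_le_nhds
    refine mem_closure_of_tendsto hc ?_
    filter_upwards [Ioo_mem_nhdsGT (zero_lt_one (α := ℝ))] with t ht using hs t ht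
  rcases h with h | h
  · refine key 1 fun t ht => ?_
    simp only [Gam, mem_ofPred_eq, one_mul, min_add_add_right, h]
    exact ⟨by linarith [ht.1], by linarith [ht.2]⟩
  · refine key (-1) fun t ht => ?_
    simp only [Gam, mem_ofPred_eq, min_add_add_right, h]
    exact ⟨by linarith [ht.2], by linarith [ht.1]⟩

/-- Explicit form of the Dirichlet part of the boundary. -/
lemma mem_DirB {R : ℝ} {p : ℝ × ℝ} :
    p ∈ DirB R ↔ p ∈ Box (R + 1) ∧ (min p.1 p.2 = -1 ∨ min p.1 p.2 = 0) := by
  have hB := isOpen_Box (R + 1)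
  have hloc := frontier_inter_open_inter (s := Gam) hB
  constructor
  · rintro ⟨h1, h2⟩
    have hpB : p ∈ Box (R + 1) := by
      by_contra hn
      refine h2 ⟨h1, ?_⟩
      rw [hB.frontier_eq]
      exact ⟨closure_mono inter_subset_right h1.1, hn⟩
    have h3 : p ∈ frontier Gam ∩ Box (R + 1) := hloc ▸ ⟨h1, hpB⟩
    have h4 := h3.1
    rw [isOpen_Gam.frontier_eq] at h4
    have h5 := closure_Gam_subset h4.1
    refine ⟨hpB, ?_⟩
    by_contra hn
    push Not at hn
    exact h4.2 ⟨lt_of_le_of_ne h5.1 (Ne.symm hn.1), lt_of_le_of_ne h5.2 hn.2⟩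
  · rintro ⟨hpB, h⟩
    have h3 : p ∈ frontier Gam ∩ Box (R + 1) := by
      refine ⟨?_, hpB⟩
      rw [isOpen_Gam.frontier_eq]
      refine ⟨mem_closure_Gam h, fun hG => ?_⟩
      rcases h with h | h
      · exact absurd hG.1 (by rw [h]; exact lt_irrefl _)
      · exact absurd hG.2 (by rw [h]; exact lt_irrefl _)
    rw [← hloc] at h3
    refine ⟨h3.1, fun hS => ?_⟩
    have := hS.2
    rw [hB.frontier_eq] at this
    exact this.2 hpB

lemma DirB_mono {R R' : ℝ} (h : R ≤ R') : DirB R ⊆ DirB R' := by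
  intro p hp
  rw [mem_DirB] at hp ⊢
  exact ⟨⟨hp.1.1.trans_le (by linarith), hp.1.2.trans_le (by linarith)⟩, hp.2⟩

lemma AdmR.mono {R R' : ℝ} (h : R ≤ R') {u : ℝ × ℝ → ℝ} (hu : AdmR R' u) : AdmR R u :=
  ⟨hu.1, fun p hp => hu.2 p (DirB_mono h hp)⟩

/-- An admissible function vanishes on the outer left edge, up to the Neumann end by continuity. -/
lemma AdmR.zero_left {R : ℝ} (hR : 0 < R) {u : ℝ × ℝ → ℝ} (hu : AdmR R u) {y : ℝ}
    (hy : y ∈ Icc (-1) R) : u (-1, y) = 0 := by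
  have h : EqOn (fun y => u (-1, y)) (fun _ => 0) (closure (Ioo (-1) R)) := by
    refine EqOn.closure (fun z hz => hu.2 _ ?_) ?_ continuous_const
    · rw [mem_DirB]
      refine ⟨⟨by simp; linarith, ?_⟩, Or.inl ?_⟩
      · rw [abs_lt]; exact ⟨by linarith [hz.1], by linarith [hz.2]⟩
      · exact min_eq_left hz.1.le
    · have := hu.1.continuous; fun_prop
  rw [closure_Ioo (by linarith)] at h
  exact h hy

/-- An admissible function vanishes on the inner vertical edge. -/
lemma AdmR.zero_inner {R : ℝ} (hR : 0 < R) {u : ℝ × ℝ → ℝ} (hu : AdmR R u) {y : ℝ}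
    (hy : y ∈ Icc 0 R) : u (0, y) = 0 := by
  have h : EqOn (fun y => u (0, y)) (fun _ => 0) (closure (Ioo 0 R)) := by
    refine EqOn.closure (fun z hz => hu.2 _ ?_) ?_ continuous_const
    · rw [mem_DirB]
      refine ⟨⟨by simp; linarith, ?_⟩, Or.inr ?_⟩
      · rw [abs_lt]; exact ⟨by linarith [hz.1], by linarith [hz.2]⟩
      · exact min_eq_left hz.1.le
    · have := hu.1.continuous; fun_prop
  rw [closure_Ioo (by linarith)] at h
  exact h hy

lemma AdmR.swap {R : ℝ} {u : ℝ × ℝ → ℝ} (hu : AdmR R u) : AdmR R (fun p => u p.swap) := by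
  refine ⟨hu.1.comp (contDiff_snd.prodMk contDiff_fst), fun p hp => hu.2 _ ?_⟩
  rw [mem_DirB] at hp ⊢
  refine ⟨⟨hp.1.2, hp.1.1⟩, ?_⟩
  simpa [min_comm] using hp.2

/-! ### Partial derivatives -/

/-- The partial derivative in the first variable. -/
def d1 (u : ℝ × ℝ → ℝ) (p : ℝ × ℝ) : ℝ := fderiv ℝ u p (1, 0)

/-- The partial derivative in the second variable. -/
def d2 (u : ℝ × ℝ → ℝ) (p : ℝ × ℝ) : ℝ := fderiv ℝ u p (0, 1)

lemma gradSq2_eq (u : ℝ × ℝ → ℝ) (p : ℝ × ℝ) : gradSq2 u p = d1 u p ^ 2 + d2 u p ^ 2 := rfl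

lemma continuous_d1 {u : ℝ × ℝ → ℝ} (hu : ContDiff ℝ 1 u) : Continuous (d1 u) :=
  (hu.continuous_fderiv one_ne_zero).clm_apply continuous_const

lemma continuous_d2 {u : ℝ × ℝ → ℝ} (hu : ContDiff ℝ 1 u) : Continuous (d2 u) :=
  (hu.continuous_fderiv one_ne_zero).clm_apply continuous_const

lemma continuous_gradSq2 {u : ℝ × ℝ → ℝ} (hu : ContDiff ℝ 1 u) : Continuous (gradSq2 u) :=
  ((continuous_d1 hu).pow 2).add ((continuous_d2 hu).pow 2)

lemma hasDerivAt_d1 {u : ℝ × ℝ → ℝ} (hu : ContDiff ℝ 1 u) (x y : ℝ) :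
    HasDerivAt (fun x => u (x, y)) (d1 u (x, y)) x := by
  have h1 : HasFDerivAt u (fderiv ℝ u (x, y)) (x, y) :=
    (hu.differentiable one_ne_zero (x, y)).hasFDerivAt
  have h2 : HasDerivAt (fun x : ℝ => (x, y)) ((1 : ℝ), (0 : ℝ)) x :=
    (hasDerivAt_id x).prodMk (hasDerivAt_const x y)
  exact h1.comp_hasDerivAt x h2

lemma hasDerivAt_d2 {u : ℝ × ℝ → ℝ} (hu : ContDiff ℝ 1 u) (x y : ℝ) :
    HasDerivAt (fun y => u (x, y)) (d2 u (x, y)) y := by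
  have h1 : HasFDerivAt u (fderiv ℝ u (x, y)) (x, y) :=
    (hu.differentiable one_ne_zero (x, y)).hasFDerivAt
  have h2 : HasDerivAt (fun y : ℝ => (x, y)) ((0 : ℝ), (1 : ℝ)) y :=
    (hasDerivAt_const y x).prodMk (hasDerivAt_id y)
  exact h1.comp_hasDerivAt y h2

lemma d1_swap {u : ℝ × ℝ → ℝ} (hu : ContDiff ℝ 1 u) (p : ℝ × ℝ) :
    d1 (fun q => u q.swap) p = d2 u p.swap := by
  have h := hasDerivAt_d1 (u := fun q => u q.swap)
    (hu.comp (contDiff_snd.prodMk contDiff_fst)) p.1 p.2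
  exact h.unique (hasDerivAt_d2 hu p.2 p.1)

lemma d2_swap {u : ℝ × ℝ → ℝ} (hu : ContDiff ℝ 1 u) (p : ℝ × ℝ) :
    d2 (fun q => u q.swap) p = d1 u p.swap := by
  have h := hasDerivAt_d2 (u := fun q => u q.swap)
    (hu.comp (contDiff_snd.prodMk contDiff_fst)) p.1 p.2
  exact h.unique (hasDerivAt_d1 hu p.2 p.1)

/-! ### Integration over the guide -/

lemma integrableOn_GamR (R : ℝ) {F : ℝ × ℝ → ℝ} (hF : Continuous F) :
    IntegrableOn F (GamR R) := by
  refine (hF.continuousOn.integrableOn_compact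
    (isCompact_Icc (a := ((-1 : ℝ), (-1 : ℝ))) (b := (R, R)))).mono_set ?_
  intro p hp
  rw [mem_GamR] at hp
  exact ⟨⟨hp.1.1.le, hp.2.1.1.le⟩, ⟨hp.1.2.le, hp.2.1.2.le⟩⟩

lemma integrableOn_rect {F : ℝ × ℝ → ℝ} (hF : Continuous F) (a b c d : ℝ) :
    IntegrableOn F (Ioc a b ×ˢ Ioc c d) := by
  refine (hF.continuousOn.integrableOn_compact
    (isCompact_Icc (a := (a, c)) (b := (b, d)))).mono_set ?_
  rintro p ⟨h1, h2⟩
  exact ⟨⟨h1.1.le, h2.1.le⟩, ⟨h1.2, h2.2⟩⟩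

lemma integral_rect {F : ℝ × ℝ → ℝ} (hF : Continuous F) {a b c d : ℝ} (hab : a ≤ b)
    (hcd : c ≤ d) :
    ∫ p in Ioc a b ×ˢ Ioc c d, F p = ∫ x in a..b, ∫ y in c..d, F (x, y) := by
  rw [Measure.volume_eq_prod, setIntegral_prod _ (integrableOn_rect hF a b c d),
    intervalIntegral.integral_of_le hab]
  simp_rw [intervalIntegral.integral_of_le hcd]

lemma rect_swap {F : ℝ × ℝ → ℝ} (hF : Continuous F) {a b c d : ℝ} (hab : a ≤ b)
    (hcd : c ≤ d) :
    ∫ x in a..b, ∫ y in c..d, F (x, y) = ∫ y in c..d, ∫ x in a..b, F (x, y) := by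
  simp_rw [intervalIntegral.integral_of_le hab, intervalIntegral.integral_of_le hcd]
  refine integral_integral_swap (f := fun x y => F (x, y)) ?_
  rw [Measure.prod_restrict]
  exact integrableOn_rect hF a b c d

lemma line_null_fst (a : ℝ) : volume {p : ℝ × ℝ | p.1 = a} = 0 := by
  have : {p : ℝ × ℝ | p.1 = a} = {a} ×ˢ univ := by ext p; simp
  rw [this, Measure.volume_eq_prod, Measure.prod_prod]; simp

lemma line_null_snd (a : ℝ) : volume {p : ℝ × ℝ | p.2 = a} = 0 := by
  have : {p : ℝ × ℝ | p.2 = a} = univ ×ˢ {a} := by ext p; simp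
  rw [this, Measure.volume_eq_prod, Measure.prod_prod]; simp

/-- Fubini on the guide, slicing by rows: the long horizontal strip, then the vertical arm. -/
lemma integral_GamR {R : ℝ} (hR : 0 < R) {F : ℝ × ℝ → ℝ} (hF : Continuous F) :
    ∫ p in GamR R, F p = (∫ y in (-1)..0, ∫ x in (-1)..R, F (x, y)) +
      ∫ y in 0..R, ∫ x in (-1)..0, F (x, y) := by
  rw [← rect_swap hF (by linarith : (-1:ℝ) ≤ R) (by norm_num),
    ← rect_swap hF (by norm_num : (-1:ℝ) ≤ 0) hR.le,
    ← integral_rect hF (by linarith) (by norm_num), ← integral_rect hF (by norm_num) hR.le]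
  rw [← setIntegral_union _ (measurableSet_Ioc.prod measurableSet_Ioc)
    (integrableOn_rect hF _ _ _ _) (integrableOn_rect hF _ _ _ _)]
  · refine setIntegral_congr_set (Filter.eventuallyEq_set.2 ?_)
    have h0 : ∀ᵐ p : ℝ × ℝ, p ∉ {p : ℝ × ℝ | p.1 = 0} := measure_eq_zero_iff_ae_notMem.1
      (line_null_fst 0)
    have h1 : ∀ᵐ p : ℝ × ℝ, p ∉ {p : ℝ × ℝ | p.1 = R} := measure_eq_zero_iff_ae_notMem.1
      (line_null_fst R)
    have h2 : ∀ᵐ p : ℝ × ℝ, p ∉ {p : ℝ × ℝ | p.2 = 0} := measure_eq_zero_iff_ae_notMem.1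
      (line_null_snd 0)
    have h3 : ∀ᵐ p : ℝ × ℝ, p ∉ {p : ℝ × ℝ | p.2 = R} := measure_eq_zero_iff_ae_notMem.1
      (line_null_snd R)
    filter_upwards [h0, h1, h2, h3] with p h0 h1 h2 h3
    replace h0 : p.1 ≠ 0 := h0
    replace h1 : p.1 ≠ R := h1
    replace h2 : p.2 ≠ 0 := h2
    replace h3 : p.2 ≠ R := h3
    refine mem_GamR.trans ?_
    simp only [mem_union, mem_prod, mem_Ioc]
    constructor
    · rintro ⟨⟨ha, hb⟩, ⟨hc, hd⟩, he⟩
      rcases lt_or_gt_of_ne h2 with h | h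
      · exact Or.inl ⟨⟨ha, hb.le⟩, hc, h.le⟩
      · rcases he with he | he
        · exact Or.inr ⟨⟨ha, he.le⟩, h, hd.le⟩
        · linarith
    · rintro (⟨⟨ha, hb⟩, hc, hd⟩ | ⟨⟨ha, hb⟩, hc, hd⟩)
      · exact ⟨⟨ha, lt_of_le_of_ne hb h1⟩, ⟨hc, by linarith⟩, Or.inr (lt_of_le_of_ne hd h2)⟩
      · exact ⟨⟨ha, by linarith⟩, ⟨by linarith, lt_of_le_of_ne hd h3⟩,
          Or.inl (lt_of_le_of_ne hb h0)⟩
  · rw [Set.disjoint_left]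
    rintro p ⟨_, h1⟩ ⟨_, h2⟩
    exact absurd h1.2 (not_le.2 h2.1)

lemma integral_GamR_swap {R : ℝ} (F : ℝ × ℝ → ℝ) :
    ∫ p in GamR R, F p.swap = ∫ p in GamR R, F p := by
  have hm : MeasurePreserving (Prod.swap : ℝ × ℝ → ℝ × ℝ) volume volume := by
    rw [Measure.volume_eq_prod]; exact Measure.measurePreserving_swap
  have h := hm.setIntegral_preimage_emb
    (MeasurableEquiv.prodComm (α := ℝ) (β := ℝ)).measurableEmbedding F (GamR R)
  rw [← h]
  congr 2
  ext p
  simp only [mem_preimage, mem_GamR, Prod.fst_swap, Prod.snd_swap]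
  tauto

/-! ### One-dimensional inequalities -/

/-- The Dirichlet Poincaré inequality on the unit interval with a constant `θ² < π²`; the positive
function `cos (θ (t + 1/2))` is used as a Riccati-type comparison function. -/
lemma poincare_aux {w w' : ℝ → ℝ} (hw : ∀ t, HasDerivAt w (w' t) t) (hw' : Continuous w')
    (h1 : w (-1) = 0) (h0 : w 0 = 0) {θ : ℝ} (hθ0 : 0 < θ) (hθ : θ < π) :
    θ ^ 2 * ∫ t in (-1)..0, w t ^ 2 ≤ ∫ t in (-1)..0, w' t ^ 2 := by
  have hwc : Continuous w := continuous_iff_continuousAt.2 fun t => (hw t).continuousAt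
  set T : ℝ → ℝ := fun t => -θ * tan (θ * (t + 1 / 2)) with hT
  have hcos : ∀ t ∈ uIcc (-1 : ℝ) 0, cos (θ * (t + 1 / 2)) ≠ 0 := by
    intro t ht
    rw [uIcc_of_le (by norm_num)] at ht
    refine (cos_pos_of_mem_Ioo ⟨?_, ?_⟩).ne'
    · nlinarith [ht.1, ht.2]
    · nlinarith [ht.1, ht.2]
  have hTd : ∀ t ∈ uIcc (-1 : ℝ) 0, HasDerivAt T (-θ ^ 2 - T t ^ 2) t := by
    intro t ht
    have h2 : HasDerivAt (fun t : ℝ => θ * (t + 1 / 2)) (θ * 1) t :=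
      ((hasDerivAt_id t).add_const _).const_mul θ
    have h3 := ((hasDerivAt_tan (hcos t ht)).comp t h2).const_mul (-θ)
    refine h3.congr_deriv ?_
    have hc := hcos t ht
    have hs := sin_sq_add_cos_sq (θ * (t + 1 / 2))
    simp only [hT, tan_eq_sin_div_cos]
    generalize cos (θ * (t + 1 / 2)) = c at *
    generalize sin (θ * (t + 1 / 2)) = s at *
    field_simp
    linear_combination hs
  have hTc : ContinuousOn T (uIcc (-1) 0) := fun t ht => (hTd t ht).continuousAt.continuousWithinAt
  have hder : ∀ t ∈ uIcc (-1 : ℝ) 0, HasDerivAt (fun t => w t ^ 2 * T t)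
      (2 * w t * w' t * T t + w t ^ 2 * (-θ ^ 2 - T t ^ 2)) t := by
    intro t ht
    refine (((hw t).pow 2).mul (hTd t ht)).congr_deriv ?_
    norm_num
  have hc : ContinuousOn (fun t => 2 * w t * w' t * T t + w t ^ 2 * (-θ ^ 2 - T t ^ 2))
      (uIcc (-1) 0) := by
    have a := hwc.continuousOn (s := uIcc (-1 : ℝ) 0)
    have b := hw'.continuousOn (s := uIcc (-1 : ℝ) 0)
    fun_prop
  have h_int := intervalIntegral.integral_eq_sub_of_hasDerivAt hder hc.intervalIntegrable
  have hmono : ∫ t in (-1)..0, (2 * w t * w' t * T t + w t ^ 2 * (-θ ^ 2 - T t ^ 2)) ≤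
      ∫ t in (-1)..0, (w' t ^ 2 - θ ^ 2 * w t ^ 2) := by
    refine intervalIntegral.integral_mono_on (by norm_num) hc.intervalIntegrable
      (Continuous.intervalIntegrable (by fun_prop) _ _) fun t _ => ?_
    nlinarith [sq_nonneg (w' t - w t * T t)]
  rw [h_int, intervalIntegral.integral_sub (Continuous.intervalIntegrable (by fun_prop) _ _)
    (Continuous.intervalIntegrable (by fun_prop) _ _), intervalIntegral.integral_const_mul] at hmono
  simp only [h0, h1] at hmono
  linarith

lemma poincare {w w' : ℝ → ℝ} (hw : ∀ t, HasDerivAt w (w' t) t) (hw' : Continuous w')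
    (h1 : w (-1) = 0) (h0 : w 0 = 0) :
    π ^ 2 * ∫ t in (-1)..0, w t ^ 2 ≤ ∫ t in (-1)..0, w' t ^ 2 := by
  have ht : Filter.Tendsto (fun θ : ℝ => θ ^ 2 * ∫ t in (-1)..0, w t ^ 2)
      (nhdsWithin π (Iio π)) (nhds (π ^ 2 * ∫ t in (-1)..0, w t ^ 2)) := by
    have : Continuous (fun θ : ℝ => θ ^ 2 * ∫ t in (-1)..0, w t ^ 2) := by fun_prop
    exact (this.tendsto π).mono_left nhdsWithin_le_nhds
  refine le_of_tendsto ht ?_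
  filter_upwards [Ioo_mem_nhdsLT pi_pos] with θ hθ using poincare_aux hw hw' h1 h0 hθ.1 hθ.2

lemma sq_le_integral_deriv_sq {w w' : ℝ → ℝ} (hw : ∀ t, HasDerivAt w (w' t) t)
    (hw' : Continuous w') {a b x : ℝ} (ha : w a = 0) (hx : x ∈ Icc a b) :
    w x ^ 2 ≤ (b - a) * ∫ t in a..b, w' t ^ 2 := by
  have h_int : ∫ t in a..x, w' t = w x := by
    rw [intervalIntegral.integral_eq_sub_of_hasDerivAt (fun t _ => hw t)
      (hw'.intervalIntegrable _ _), ha, sub_zero]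
  have hJ : 0 ≤ ∫ t in a..x, w' t ^ 2 :=
    intervalIntegral.integral_nonneg hx.1 fun t _ => sq_nonneg _
  have hmono : ∫ t in a..x, w' t ^ 2 ≤ ∫ t in a..b, w' t ^ 2 := by
    rw [← intervalIntegral.integral_add_adjacent_intervals (b := x) (c := b)
      (Continuous.intervalIntegrable (by fun_prop) _ _)
      (Continuous.intervalIntegrable (by fun_prop) _ _)]
    have : 0 ≤ ∫ t in x..b, w' t ^ 2 :=
      intervalIntegral.integral_nonneg hx.2 fun t _ => sq_nonneg _
    linarith
  have hab : 0 ≤ x - a := by linarith [hx.1]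
  have key : w x ^ 2 ≤ (x - a) * ∫ t in a..x, w' t ^ 2 := by
    rcases hab.eq_or_lt with h | h
    · have : x = a := by linarith
      subst this; simp [ha]
    have h2 : 0 ≤ ∫ t in a..x, ((x - a) * w' t - w x) ^ 2 :=
      intervalIntegral.integral_nonneg hx.1 fun t _ => sq_nonneg _
    have h3 : ∫ t in a..x, ((x - a) * w' t - w x) ^ 2 =
        (x - a) ^ 2 * (∫ t in a..x, w' t ^ 2) - 2 * (x - a) * w x * (∫ t in a..x, w' t)
          + w x ^ 2 * (x - a) := by
      rw [← intervalIntegral.integral_const_mul, ← intervalIntegral.integral_const_mul,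
        ← intervalIntegral.integral_sub (Continuous.intervalIntegrable (by fun_prop) _ _)
          (Continuous.intervalIntegrable (by fun_prop) _ _)]
      have : w x ^ 2 * (x - a) = ∫ t in a..x, w x ^ 2 := by simp [mul_comm]
      rw [this, ← intervalIntegral.integral_add (Continuous.intervalIntegrable (by fun_prop) _ _)
          (Continuous.intervalIntegrable (by fun_prop) _ _)]
      congr 1; ext t; ring
    rw [h3, h_int] at h2
    have h4 : 0 ≤ (x - a) * ((x - a) * (∫ t in a..x, w' t ^ 2) - w x ^ 2) := by nlinarith
    have := nonneg_of_mul_nonneg_right h4 h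
    linarith
  refine key.trans (mul_le_mul (by linarith [hx.2]) hmono hJ (by linarith [hx.1, hx.2]))

lemma by_parts_1d {w w' g g' : ℝ → ℝ} (hw : ∀ t, HasDerivAt w (w' t) t) (hw' : Continuous w')
    (hg : ∀ t, HasDerivAt g (g' t) t) (hg' : Continuous g') {a b : ℝ} (k : ℝ)
    (ha : w a * g a = 0) (hb : w b * g b = 0) :
    ∫ t in a..b, w' t * (g t * k) = -∫ t in a..b, w t * (g' t * k) := by
  have h := intervalIntegral.integral_mul_deriv_eq_deriv_mul (a := a) (b := b)
    (fun x _ => hw x) (fun x _ => hg x)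
    (hw'.intervalIntegrable _ _) (hg'.intervalIntegrable _ _)
  rw [ha, hb] at h
  simp only [← mul_assoc]
  rw [intervalIntegral.integral_mul_const, intervalIntegral.integral_mul_const, h]
  ring

/-! ### Integral estimates on the guide -/

lemma continuous_slice_integral {F : ℝ × ℝ → ℝ} (hF : Continuous F) (a b : ℝ) :
    Continuous fun y => ∫ x in a..b, F (x, y) :=
  intervalIntegral.continuous_parametric_intervalIntegral_of_continuous'
    (f := fun y x => F (x, y)) (by exact hF.comp continuous_swap) a b

lemma rect_mono {F H : ℝ × ℝ → ℝ} (hF : Continuous F) (hH : Continuous H) {a b c d : ℝ}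
    (hab : a ≤ b) (hcd : c ≤ d) (h : ∀ x ∈ Icc a b, ∀ y ∈ Icc c d, F (x, y) ≤ H (x, y)) :
    ∫ y in c..d, ∫ x in a..b, F (x, y) ≤ ∫ y in c..d, ∫ x in a..b, H (x, y) := by
  refine intervalIntegral.integral_mono_on hcd ((continuous_slice_integral hF a b).intervalIntegrable _ _)
    ((continuous_slice_integral hH a b).intervalIntegrable _ _) fun y hy => ?_
  exact intervalIntegral.integral_mono_on hab (Continuous.intervalIntegrable (by fun_prop) _ _)
    (Continuous.intervalIntegrable (by fun_prop) _ _) fun x hx => h x hx y hy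

lemma rect_nonneg {F : ℝ × ℝ → ℝ} {a b c d : ℝ} (hab : a ≤ b) (hcd : c ≤ d)
    (h : ∀ p, 0 ≤ F p) : 0 ≤ ∫ y in c..d, ∫ x in a..b, F (x, y) :=
  intervalIntegral.integral_nonneg hcd fun _ _ =>
    intervalIntegral.integral_nonneg hab fun _ _ => h _

/-- The part of the guide between the levels `R` and `R'` consists of two rectangles. -/
lemma integral_GamR_sub {R R' : ℝ} (hR : 0 < R) (hRR : R < R') {F : ℝ × ℝ → ℝ}
    (hF : Continuous F) :
    (∫ p in GamR R', F p) - ∫ p in GamR R, F p =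
      (∫ x in R..R', ∫ y in (-1)..0, F (x, y)) + ∫ y in R..R', ∫ x in (-1)..0, F (x, y) := by
  have hFs : Continuous fun p : ℝ × ℝ => F p.swap := hF.comp continuous_swap
  have hi := fun a b => (continuous_slice_integral hF (-1) 0).intervalIntegrable (μ := volume) a b
  have hi' : ∀ a b, IntervalIntegrable (fun x => ∫ y in (-1)..0, F (x, y)) volume a b :=
    fun a b => (continuous_slice_integral hFs (-1) 0).intervalIntegrable a b
  rw [integral_GamR (hR.trans hRR) hF, integral_GamR hR hF,
    ← rect_swap hF (by linarith : (-1 : ℝ) ≤ R') (by norm_num : (-1 : ℝ) ≤ 0),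
    ← rect_swap hF (by linarith : (-1 : ℝ) ≤ R) (by norm_num : (-1 : ℝ) ≤ 0),
    ← intervalIntegral.integral_add_adjacent_intervals (hi 0 R) (hi R R'),
    ← intervalIntegral.integral_add_adjacent_intervals (hi' (-1) R) (hi' R R')]
  ring

/-- The transversal Poincaré inequality in the part of the arms between `R` and `R'`. -/
lemma arms_poincare {R R' : ℝ} (hR : 0 < R) (hRR : R < R') {u : ℝ × ℝ → ℝ} (hu : AdmR R' u) :
    π ^ 2 * ((∫ p in GamR R', u p ^ 2) - ∫ p in GamR R, u p ^ 2) ≤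
      (∫ p in GamR R', gradSq2 u p) - ∫ p in GamR R, gradSq2 u p := by
  have arm : ∀ v : ℝ × ℝ → ℝ, AdmR R' v →
      π ^ 2 * (∫ y in R..R', ∫ x in (-1)..0, v (x, y) ^ 2) ≤
        ∫ y in R..R', ∫ x in (-1)..0, d1 v (x, y) ^ 2 := by
    intro v hv
    have hvc := hv.1.continuous
    have hdc := continuous_d1 hv.1
    rw [← intervalIntegral.integral_const_mul]
    refine intervalIntegral.integral_mono_on hRR.le
      ((continuous_slice_integral (F := fun p => v p ^ 2) (by fun_prop) _ _).const_mul _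
        |>.intervalIntegrable _ _)
      ((continuous_slice_integral (F := fun p => d1 v p ^ 2) (by fun_prop) _ _).intervalIntegrable _ _)
      fun y hy => ?_
    refine poincare (fun t => hasDerivAt_d1 hv.1 t y) (by fun_prop) ?_ ?_
    · exact hv.zero_left (hR.trans hRR) ⟨by linarith [hy.1], hy.2⟩
    · exact hv.zero_inner (hR.trans hRR) ⟨by linarith [hy.1], hy.2⟩
  have hvc := hu.1.continuous
  have hd1 := continuous_d1 hu.1
  have hd2 := continuous_d2 hu.1
  have hle1 : ∫ y in R..R', ∫ x in (-1)..0, d1 u (x, y) ^ 2 ≤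
      ∫ y in R..R', ∫ x in (-1)..0, gradSq2 u (x, y) :=
    rect_mono (F := fun p => d1 u p ^ 2) (by fun_prop) (continuous_gradSq2 hu.1) (by norm_num)
      hRR.le fun x _ y _ => by rw [gradSq2_eq]; nlinarith [sq_nonneg (d2 u (x, y))]
  have hle2 : ∫ x in R..R', ∫ y in (-1)..0, d2 u (x, y) ^ 2 ≤
      ∫ x in R..R', ∫ y in (-1)..0, gradSq2 u (x, y) :=
    rect_mono (F := fun p => d2 u p.swap ^ 2) (H := fun p => gradSq2 u p.swap) (by fun_prop)
      ((continuous_gradSq2 hu.1).comp continuous_swap) (by norm_num)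
      hRR.le fun x _ y _ => by
        simp only [Prod.swap_prod_mk]; rw [gradSq2_eq]; nlinarith [sq_nonneg (d1 u (y, x))]
  have h1 := arm u hu
  have h2 := arm _ hu.swap
  simp only [d1_swap hu.1, Prod.swap_prod_mk] at h2
  rw [integral_GamR_sub hR hRR (F := fun p => u p ^ 2) (by fun_prop),
    integral_GamR_sub hR hRR (continuous_gradSq2 hu.1)]
  linarith

/-- Integration by parts in the first variable; there is no boundary term since `u` vanishes on
the Dirichlet edges and `g` at the Neumann end. -/
lemma by_parts_GamR {L : ℝ} (hL : 0 < L) {u : ℝ × ℝ → ℝ} (hu : AdmR L u) {g g' k : ℝ → ℝ}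
    (hg : ∀ t, HasDerivAt g (g' t) t) (hg' : Continuous g') (hk : Continuous k)
    (hgL : g L = 0) :
    ∫ p in GamR L, d1 u p * (g p.1 * k p.2) = -∫ p in GamR L, u p * (g' p.1 * k p.2) := by
  have hgc : Continuous g := continuous_iff_continuousAt.2 fun t => (hg t).continuousAt
  have hvc := hu.1.continuous
  have hd1 := continuous_d1 hu.1
  rw [integral_GamR hL (by fun_prop), integral_GamR hL (by fun_prop), neg_add]
  have hd1' : ∀ y, Continuous fun x => d1 u (x, y) := fun y => by fun_prop
  congr 1
  · rw [← intervalIntegral.integral_neg]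
    refine intervalIntegral.integral_congr fun y hy => ?_
    rw [uIcc_of_le (by norm_num)] at hy
    exact by_parts_1d (w := fun x => u (x, y)) (fun t => hasDerivAt_d1 hu.1 t y) (hd1' y) hg hg' (k y)
      (by simp only [hu.zero_left hL ⟨hy.1, by linarith [hy.2]⟩, zero_mul]) (by simp [hgL])
  · rw [← intervalIntegral.integral_neg]
    refine intervalIntegral.integral_congr fun y hy => ?_
    rw [uIcc_of_le hL.le] at hy
    exact by_parts_1d (w := fun x => u (x, y)) (fun t => hasDerivAt_d1 hu.1 t y) (hd1' y) hg hg' (k y)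
      (by simp only [hu.zero_left hL ⟨by linarith [hy.1], hy.2⟩, zero_mul])
      (by simp only [hu.zero_inner hL hy, zero_mul])

lemma strip_le_GamR {L : ℝ} (hL : 0 < L) {F : ℝ × ℝ → ℝ} (hF : Continuous F)
    (h0 : ∀ p, 0 ≤ F p) :
    ∫ y in (-1)..0, ∫ x in (-1)..L, F (x, y) ≤ ∫ p in GamR L, F p := by
  rw [integral_GamR hL hF]
  have := rect_nonneg (F := F) (by norm_num : (-1 : ℝ) ≤ 0) hL.le h0
  linarith

/-- Ladyzhenskaya-type bound on the long strip: `u²` is bounded both by a function of `x₁` and by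
a function of `x₂`, whose integrals are controlled by the energy. -/
lemma strip_fourth {L : ℝ} (hL : 0 < L) {u : ℝ × ℝ → ℝ} (hu : AdmR L u) :
    ∫ y in (-1)..0, ∫ x in (-1)..L, u (x, y) ^ 4 ≤ (L + 1) * (∫ p in GamR L, gradSq2 u p) ^ 2 := by
  have hvc := hu.1.continuous
  have hd1 := continuous_d1 hu.1
  have hd2 := continuous_d2 hu.1
  set A : ℝ → ℝ := fun y => ∫ x in (-1)..L, d1 u (x, y) ^ 2 with hA
  set B : ℝ → ℝ := fun x => ∫ y in (-1)..0, d2 u (x, y) ^ 2 with hB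
  have hAc : Continuous A := continuous_slice_integral (F := fun p => d1 u p ^ 2) (by fun_prop) _ _
  have hBc : Continuous B := continuous_slice_integral (F := fun p => d2 u p.swap ^ 2) (by fun_prop) _ _
  have hA0 : ∀ y, 0 ≤ A y := fun y =>
    intervalIntegral.integral_nonneg (by linarith) fun _ _ => sq_nonneg _
  have hB0 : ∀ y, 0 ≤ B y := fun y =>
    intervalIntegral.integral_nonneg (by norm_num) fun _ _ => sq_nonneg _
  have hpt : ∀ x ∈ Icc (-1) L, ∀ y ∈ Icc (-1 : ℝ) 0, u (x, y) ^ 4 ≤ (L + 1) * A y * B x := by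
    intro x hx y hy
    have h1 : u (x, y) ^ 2 ≤ (L - (-1)) * A y :=
      sq_le_integral_deriv_sq (w := fun x => u (x, y)) (fun t => hasDerivAt_d1 hu.1 t y)
        (by fun_prop) (hu.zero_left hL ⟨hy.1, by linarith [hy.2]⟩) hx
    have h2 : u (x, y) ^ 2 ≤ (0 - (-1)) * B x :=
      sq_le_integral_deriv_sq (w := fun y => u (x, y)) (fun t => hasDerivAt_d2 hu.1 x t)
        (by fun_prop) (hu.swap.zero_left hL (y := x) hx) hy
    have h3 := mul_le_mul h1 h2 (sq_nonneg _) ((sq_nonneg _).trans h1)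
    calc u (x, y) ^ 4 = u (x, y) ^ 2 * u (x, y) ^ 2 := by ring
      _ ≤ _ := h3
      _ = _ := by ring
  have hAI : ∫ y in (-1)..0, A y ≤ ∫ p in GamR L, gradSq2 u p := by
    refine (rect_mono (F := fun p => d1 u p ^ 2) (by fun_prop) (continuous_gradSq2 hu.1)
      (by linarith) (by norm_num) fun x _ y _ => ?_).trans
      (strip_le_GamR hL (continuous_gradSq2 hu.1) fun p => by rw [gradSq2_eq]; positivity)
    rw [gradSq2_eq]; nlinarith [sq_nonneg (d2 u (x, y))]
  have hBI : ∫ x in (-1)..L, B x ≤ ∫ p in GamR L, gradSq2 u p := by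
    rw [hB, rect_swap (F := fun p => d2 u p ^ 2) (by fun_prop) (by linarith) (by norm_num)]
    refine (rect_mono (F := fun p => d2 u p ^ 2) (by fun_prop) (continuous_gradSq2 hu.1)
      (by linarith) (by norm_num) fun x _ y _ => ?_).trans
      (strip_le_GamR hL (continuous_gradSq2 hu.1) fun p => by rw [gradSq2_eq]; positivity)
    rw [gradSq2_eq]; nlinarith [sq_nonneg (d1 u (x, y))]
  calc ∫ y in (-1)..0, ∫ x in (-1)..L, u (x, y) ^ 4
      ≤ ∫ y in (-1)..0, ∫ x in (-1)..L, (L + 1) * A y * B x :=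
        rect_mono (F := fun p => u p ^ 4) (H := fun p => (L + 1) * A p.2 * B p.1)
          (by fun_prop) (by fun_prop) (by linarith) (by norm_num) hpt
    _ = (L + 1) * ((∫ y in (-1)..0, A y) * ∫ x in (-1)..L, B x) := by
        simp_rw [intervalIntegral.integral_const_mul]
        rw [intervalIntegral.integral_mul_const, intervalIntegral.integral_const_mul]
        ring
    _ ≤ _ := by
        rw [sq]
        refine mul_le_mul_of_nonneg_left (mul_le_mul hAI hBI ?_ ?_) (by linarith)
        · exact intervalIntegral.integral_nonneg (by linarith) fun _ _ => hB0 _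
        · exact (intervalIntegral.integral_nonneg (by norm_num) fun _ _ => hA0 _).trans hAI

lemma integral_gradSq2_swap {L : ℝ} {u : ℝ × ℝ → ℝ} (hu : ContDiff ℝ 1 u) :
    ∫ p in GamR L, gradSq2 (fun q => u q.swap) p = ∫ p in GamR L, gradSq2 u p := by
  rw [← integral_GamR_swap (gradSq2 u)]
  congr 1; ext p
  rw [gradSq2_eq, gradSq2_eq, d1_swap hu, d2_swap hu, add_comm]

lemma GamR_fourth {L : ℝ} (hL : 0 < L) {u : ℝ × ℝ → ℝ} (hu : AdmR L u) :
    ∫ p in GamR L, u p ^ 4 ≤ 2 * (L + 1) * (∫ p in GamR L, gradSq2 u p) ^ 2 := by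
  have hvc := hu.1.continuous
  have h1 := strip_fourth hL hu
  have h2 := strip_fourth hL hu.swap
  rw [integral_gradSq2_swap hu.1] at h2
  simp only [Prod.swap_prod_mk] at h2
  have h3 : ∫ y in 0..L, ∫ x in (-1)..0, u (x, y) ^ 4 ≤
      ∫ y in (-1)..L, ∫ x in (-1)..0, u (x, y) ^ 4 := by
    have hi := fun a b => (continuous_slice_integral (F := fun p => u p ^ 4) (by fun_prop)
      (-1) 0).intervalIntegrable (μ := volume) a b
    rw [← intervalIntegral.integral_add_adjacent_intervals (hi (-1) 0) (hi 0 L)]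
    have := rect_nonneg (F := fun p => u p ^ 4) (by norm_num : (-1 : ℝ) ≤ 0)
      (by norm_num : (-1 : ℝ) ≤ 0) fun p => by positivity
    linarith
  have h4 := rect_swap (F := fun p => u p ^ 4) (by fun_prop) (by norm_num : (-1:ℝ) ≤ 0)
    (by linarith : (-1 : ℝ) ≤ L)
  rw [integral_GamR hL (by fun_prop)]
  linarith

/-! ### One-dimensional building blocks -/

lemma hasDerivAt_clamp_min {h h' : ℝ → ℝ} (hh : ∀ t, HasDerivAt h (h' t) t)
    (hc : Continuous h') (h0 : h' 0 = 0) (x : ℝ) :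
    HasDerivAt (fun x => h (min x 0)) (h' (min x 0)) x := by
  have hhc : Continuous h := continuous_iff_continuousAt.2 fun t => (hh t).continuousAt
  have hne : ∀ y : ℝ, y ≠ 0 → HasDerivAt (fun x => h (min x 0)) (h' (min y 0)) y := by
    intro y hy
    rcases lt_or_gt_of_ne hy with hy | hy
    · rw [min_eq_left hy.le]
      refine (hh y).congr_of_eventuallyEq ?_
      filter_upwards [Iio_mem_nhds hy] with z hz
      rw [min_eq_left (le_of_lt hz)]
    · rw [min_eq_right hy.le, h0]
      refine (hasDerivAt_const y (h 0)).congr_of_eventuallyEq ?_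
      filter_upwards [Ioi_mem_nhds hy] with z hz
      rw [min_eq_right (le_of_lt hz)]
  by_cases hx : x = 0
  · subst hx
    exact hasDerivAt_of_hasDerivAt_of_ne (g := fun y => h' (min y 0)) hne
      (by fun_prop) (by fun_prop)
  · exact hne x hx

lemma hasDerivAt_clamp_max {h h' : ℝ → ℝ} (hh : ∀ t, HasDerivAt h (h' t) t)
    (hc : Continuous h') (h0 : h' 0 = 0) (x : ℝ) :
    HasDerivAt (fun x => h (max x 0)) (h' (max x 0)) x := by
  have h1 : ∀ t, HasDerivAt (fun t => h (-t)) (-h' (-t)) t := fun t =>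
    ((hh (-t)).comp t (hasDerivAt_neg t)).congr_deriv (by ring)
  have h2 := (hasDerivAt_clamp_min h1 (by fun_prop) (by simpa using h0) (-x)).comp x
    (hasDerivAt_neg x)
  have h3 : ∀ z : ℝ, -min (-z) 0 = max z 0 := fun z => by
    rw [← neg_zero, min_neg_neg, neg_neg, neg_zero]
  simpa only [Function.comp_def, h3, neg_mul_neg, mul_one] using h2

/-- The factor of the test function `G(x₁) G(x₂)`. It is a sine on `[-1, 0]`, a negative
hyperbolic sine on `[0, R]`, and it is corrected by a cubic beyond `R` so as to satisfy the Neumann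
condition at `L`. -/
lemma exists_testG {R L : ℝ} (hR : 0 < R) (hRL : R < L) :
    ∃ G G1 G2 : ℝ → ℝ, (∀ x, HasDerivAt G (G1 x) x) ∧ (∀ x, HasDerivAt G1 (G2 x) x) ∧
      Continuous G2 ∧ G (-1) = 0 ∧ G 0 = 0 ∧ G1 L = 0 ∧
      (∀ x ∈ Ioo (-1 : ℝ) 0, 0 < G x ∧ G2 x = -π ^ 2 * G x) ∧
      ∀ x ∈ Ioo 0 R, G x < 0 ∧ G2 x = 4 * π ^ 2 * G x := by
  set c : ℝ := π * cosh (2 * π * L) / (3 * (L - R) ^ 2) with hc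
  have hLR : 0 < L - R := by linarith
  -- each piece is clamped after subtracting its linear part, so that its derivative vanishes at
  -- the gluing point
  have a1 : ∀ t, HasDerivAt (fun t => sin (π * t) - π * t) (π * cos (π * t) - π) t := fun t => by
    have h : HasDerivAt (fun t => π * t) π t := by simpa using (hasDerivAt_id t).const_mul π
    exact (h.sin.sub h).congr_deriv (by ring)
  have a2 : ∀ t, HasDerivAt (fun t => π * cos (π * t) - π) (-π ^ 2 * sin (π * t)) t := fun t => by
    have h : HasDerivAt (fun t => π * t) π t := by simpa using (hasDerivAt_id t).const_mul π
    exact ((h.cos.const_mul π).sub_const π).congr_deriv (by ring)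
  have b1 : ∀ t, HasDerivAt (fun t => sinh (2 * π * t) / 2 - π * t)
      (π * cosh (2 * π * t) - π) t := fun t => by
    have h : HasDerivAt (fun t => 2 * π * t) (2 * π) t := by
      simpa using (hasDerivAt_id t).const_mul (2 * π)
    have h' : HasDerivAt (fun t => π * t) π t := by simpa using (hasDerivAt_id t).const_mul π
    exact ((h.sinh.div_const 2).sub h').congr_deriv (by ring)
  have b2 : ∀ t, HasDerivAt (fun t => π * cosh (2 * π * t) - π)
      (2 * π ^ 2 * sinh (2 * π * t)) t := fun t => by
    have h : HasDerivAt (fun t => 2 * π * t) (2 * π) t := by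
      simpa using (hasDerivAt_id t).const_mul (2 * π)
    exact ((h.cosh.const_mul π).sub_const π).congr_deriv (by ring)
  have c1 : ∀ t, HasDerivAt (fun t : ℝ => c * t ^ 3) (3 * c * t ^ 2) t := fun t =>
    ((hasDerivAt_pow 3 t).const_mul c).congr_deriv (by norm_num; ring)
  have c2 : ∀ t, HasDerivAt (fun t : ℝ => 3 * c * t ^ 2) (6 * c * t) t := fun t =>
    ((hasDerivAt_pow 2 t).const_mul (3 * c)).congr_deriv (by norm_num; ring)
  have lin : ∀ x, HasDerivAt (fun t => π * t) π x := fun x => by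
    simpa using (hasDerivAt_id x).const_mul π
  have sh : ∀ x, HasDerivAt (fun x : ℝ => x - R) 1 x := fun x => (hasDerivAt_id x).sub_const R
  refine ⟨fun x => -(π * x + (sin (π * min x 0) - π * min x 0)
      + (sinh (2 * π * max x 0) / 2 - π * max x 0) - c * max (x - R) 0 ^ 3),
    fun x => -(π + (π * cos (π * min x 0) - π) + (π * cosh (2 * π * max x 0) - π)
      - 3 * c * max (x - R) 0 ^ 2),
    fun x => -(0 + (-π ^ 2 * sin (π * min x 0)) + 2 * π ^ 2 * sinh (2 * π * max x 0)
      - 6 * c * max (x - R) 0), fun x => ?_, fun x => ?_, by fun_prop, ?_, ?_, ?_, ?_, ?_⟩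
  · have h3 := (hasDerivAt_clamp_max c1 (by fun_prop) (by simp) (x - R)).comp x (sh x)
    exact ((((lin x).add (hasDerivAt_clamp_min a1 (by fun_prop) (by simp) x)).add
      (hasDerivAt_clamp_max b1 (by fun_prop) (by simp) x)).sub
      (h3.congr_deriv (mul_one _))).neg
  · have h3 := (hasDerivAt_clamp_max c2 (by fun_prop) (by simp) (x - R)).comp x (sh x)
    exact ((((hasDerivAt_const x π).add (hasDerivAt_clamp_min a2 (by fun_prop) (by simp) x)).add
      (hasDerivAt_clamp_max b2 (by fun_prop) (by simp) x)).sub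
      (h3.congr_deriv (mul_one _))).neg
  · have h1 : max (-1 - R) 0 = 0 := max_eq_right (by linarith)
    have h2 : max (-1 : ℝ) 0 = 0 := max_eq_right (by norm_num)
    have h3 : min (-1 : ℝ) 0 = -1 := min_eq_left (by norm_num)
    simp only [h1, h2, h3]; simp
  · have h1 : max (0 - R) 0 = 0 := max_eq_right (by linarith)
    simp only [h1, max_self, min_self]; simp
  · have h1 : max (L - R) 0 = L - R := max_eq_left hLR.le
    have h2 : max L 0 = L := max_eq_left (by linarith)
    have h3 : min L 0 = 0 := min_eq_right (by linarith)
    simp only [h1, h2, h3, mul_zero, cos_zero]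
    have h4 : 3 * c * (L - R) ^ 2 = π * cosh (2 * π * L) := by rw [hc]; field_simp
    rw [h4]; ring
  · intro x hx
    have h1 : max (x - R) 0 = 0 := max_eq_right (by linarith [hx.2])
    have h2 : max x 0 = 0 := max_eq_right hx.2.le
    have h3 : min x 0 = x := min_eq_left hx.2.le
    simp only [h1, h2, h3, mul_zero, sinh_zero]
    refine ⟨?_, by ring⟩
    have : sin (π * x) < 0 := sin_neg_of_neg_of_neg_pi_lt (by nlinarith [pi_pos, hx.2])
      (by nlinarith [pi_pos, hx.1])
    linarith
  · intro x hx
    have h1 : max (x - R) 0 = 0 := max_eq_right (by linarith [hx.2])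
    have h2 : max x 0 = x := max_eq_left hx.1.le
    have h3 : min x 0 = 0 := min_eq_right hx.1.le
    simp only [h1, h2, h3, mul_zero, sin_zero]
    refine ⟨?_, by ring⟩
    have : 0 < sinh (2 * π * x) := sinh_pos_iff.2 (by have := hx.1; positivity)
    linarith

/-- A smooth regularization of the absolute value, vanishing to second order at the origin. -/
def regAbs (η s : ℝ) : ℝ := √(s ^ 2 + η ^ 2) - η

/-- The derivative of `regAbs η`. -/
def regAbs' (η s : ℝ) : ℝ := s / √(s ^ 2 + η ^ 2)

lemma contDiff_regAbs {η : ℝ} (hη : 0 < η) : ContDiff ℝ 1 (regAbs η) := by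
  have : ContDiff ℝ 1 fun s : ℝ => s ^ 2 + η ^ 2 := by fun_prop
  exact (this.sqrt fun s => by positivity).sub contDiff_const

lemma hasDerivAt_regAbs {η : ℝ} (hη : 0 < η) (s : ℝ) :
    HasDerivAt (regAbs η) (regAbs' η s) s := by
  have h : HasDerivAt (fun s : ℝ => s ^ 2 + η ^ 2) (2 * s) s :=
    ((hasDerivAt_pow 2 s).add_const _).congr_deriv (by norm_num)
  refine ((h.sqrt (by positivity)).sub_const η).congr_deriv ?_
  rw [regAbs', mul_div_mul_left _ _ two_ne_zero]

lemma continuous_regAbs' {η : ℝ} (hη : 0 < η) : Continuous (regAbs' η) := by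
  have h : ∀ s : ℝ, √(s ^ 2 + η ^ 2) ≠ 0 := fun s => by positivity
  unfold regAbs'
  exact continuous_id.div (by fun_prop) h

lemma regAbs'_sq_le {η : ℝ} (hη : 0 < η) (s : ℝ) : regAbs' η s ^ 2 ≤ 1 := by
  rw [regAbs', div_pow, sq_sqrt (by positivity), div_le_one (by positivity)]
  nlinarith

lemma regAbs_zero {η : ℝ} (hη : 0 < η) : regAbs η 0 = 0 := by
  simp [regAbs, sqrt_sq hη.le]

lemma regAbs_nonneg (η s : ℝ) : 0 ≤ regAbs η s := by
  have := le_sqrt_of_sq_le (show η ^ 2 ≤ s ^ 2 + η ^ 2 by nlinarith)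
  rw [regAbs]; linarith

lemma le_regAbs (η s : ℝ) : |s| - η ≤ regAbs η s := by
  have : |s| ≤ √(s ^ 2 + η ^ 2) := abs_le_sqrt (by nlinarith)
  rw [regAbs]; linarith

lemma regAbs_le {η : ℝ} (hη : 0 < η) (s : ℝ) : regAbs η s ≤ |s| := by
  have : √(s ^ 2 + η ^ 2) ≤ |s| + η := by
    rw [sqrt_le_left (by positivity)]
    nlinarith [sq_abs s, abs_nonneg s]
  rw [regAbs]; linarith

lemma sq_regAbs_ge {η : ℝ} (hη : 0 < η) (s : ℝ) : s ^ 2 - 2 * η * |s| ≤ regAbs η s ^ 2 := by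
  have h1 := sq_sqrt (show 0 ≤ s ^ 2 + η ^ 2 by positivity)
  have h2 : √(s ^ 2 + η ^ 2) ≤ |s| + η := by have := regAbs_le hη s; rw [regAbs] at this; linarith
  rw [regAbs]
  nlinarith

/-! ### The Rayleigh quotient -/

lemma integral_gradSq2_nonneg (R : ℝ) (u : ℝ × ℝ → ℝ) : 0 ≤ ∫ p in GamR R, gradSq2 u p :=
  integral_nonneg fun p => by rw [gradSq2_eq]; positivity

lemma integral_sq_nonneg (R : ℝ) (u : ℝ × ℝ → ℝ) : 0 ≤ ∫ p in GamR R, u p ^ 2 :=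
  integral_nonneg fun _ => sq_nonneg _

/-- The set of Rayleigh quotients whose infimum is `lamR R`. -/
def quotients (R : ℝ) : Set ℝ :=
  {r | ∃ u : ℝ × ℝ → ℝ, AdmR R u ∧ (∫ p in GamR R, (u p) ^ 2) ≠ 0 ∧
    r = (∫ p in GamR R, gradSq2 u p) / ∫ p in GamR R, (u p) ^ 2}

lemma lamR_eq (R : ℝ) : lamR R = sInf (quotients R) := rfl

lemma quotients_nonneg {R r : ℝ} (h : r ∈ quotients R) : 0 ≤ r := by
  obtain ⟨u, -, -, rfl⟩ := h
  exact div_nonneg (integral_gradSq2_nonneg R u) (integral_sq_nonneg R u)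

lemma lamR_nonneg (R : ℝ) : 0 ≤ lamR R := Real.sInf_nonneg fun _ h => quotients_nonneg h

lemma lamR_mul_le {R : ℝ} {u : ℝ × ℝ → ℝ} (hu : AdmR R u) :
    lamR R * ∫ p in GamR R, u p ^ 2 ≤ ∫ p in GamR R, gradSq2 u p := by
  by_cases h : ∫ p in GamR R, u p ^ 2 = 0
  · rw [h, mul_zero]; exact integral_gradSq2_nonneg R u
  · have h1 : lamR R ≤ _ := csInf_le ⟨0, fun _ h => quotients_nonneg h⟩ ⟨u, hu, h, rfl⟩
    exact (le_div_iff₀ (lt_of_le_of_ne (integral_sq_nonneg R u) (Ne.symm h))).1 h1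

lemma d1_comp {u : ℝ × ℝ → ℝ} (hu : ContDiff ℝ 1 u) {h h' : ℝ → ℝ} (hc : ContDiff ℝ 1 h)
    (hh : ∀ t, HasDerivAt h (h' t) t) (p : ℝ × ℝ) :
    d1 (fun q => h (u q)) p = h' (u p) * d1 u p :=
  (hasDerivAt_d1 (u := fun q => h (u q)) (hc.comp hu) p.1 p.2).unique
    ((hh _).comp p.1 (hasDerivAt_d1 hu p.1 p.2))

lemma d2_comp {u : ℝ × ℝ → ℝ} (hu : ContDiff ℝ 1 u) {h h' : ℝ → ℝ} (hc : ContDiff ℝ 1 h)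
    (hh : ∀ t, HasDerivAt h (h' t) t) (p : ℝ × ℝ) :
    d2 (fun q => h (u q)) p = h' (u p) * d2 u p :=
  (hasDerivAt_d2 (u := fun q => h (u q)) (hc.comp hu) p.1 p.2).unique
    ((hh _).comp p.2 (hasDerivAt_d2 hu p.1 p.2))

/-- Near-minimizers of the Rayleigh quotient can be chosen nonnegative and normalized: a
near-minimizer is replaced by its regularized absolute value. -/
lemma exists_near_min {R Λ : ℝ} (hne : (quotients R).Nonempty) (h : lamR R < Λ) :
    ∃ u, AdmR R u ∧ (∀ p, 0 ≤ u p) ∧ ∫ p in GamR R, u p ^ 2 = 1 ∧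
      ∫ p in GamR R, gradSq2 u p ≤ Λ := by
  obtain ⟨r, ⟨u, hu, hu0, rfl⟩, hr⟩ := exists_lt_of_csInf_lt hne h
  have hΛ : 0 < Λ := (lamR_nonneg R).trans_lt h
  have hpos : 0 < ∫ p in GamR R, u p ^ 2 := lt_of_le_of_ne (integral_sq_nonneg R u) (Ne.symm hu0)
  rw [div_lt_iff₀ hpos] at hr
  have huc := hu.1.continuous
  set I := ∫ p in GamR R, u p ^ 2
  set J := ∫ p in GamR R, gradSq2 u p
  set K := ∫ p in GamR R, |u p| with hK
  have hK0 : 0 ≤ K := integral_nonneg fun p => abs_nonneg _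
  obtain ⟨η, hη, hηK⟩ : ∃ η > 0, J < Λ * (I - 2 * η * K) := by
    refine ⟨(Λ * I - J) / (2 * Λ * K + 1), div_pos (by linarith) (by positivity), ?_⟩
    have h1 : (Λ * I - J) / (2 * Λ * K + 1) * (2 * Λ * K) < Λ * I - J := by
      rw [div_mul_eq_mul_div, div_lt_iff₀ (by positivity)]
      nlinarith
    nlinarith
  set v : ℝ × ℝ → ℝ := fun p => regAbs η (u p) with hv
  have hvC : ContDiff ℝ 1 v := (contDiff_regAbs hη).comp hu.1
  have hvI : I - 2 * η * K ≤ ∫ p in GamR R, v p ^ 2 := by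
    rw [hK, ← integral_const_mul, ← integral_sub (integrableOn_GamR R (by fun_prop))
      (integrableOn_GamR R (by fun_prop))]
    refine integral_mono (integrableOn_GamR R (by fun_prop))
      (integrableOn_GamR R (hvC.continuous.pow 2)) fun p => sq_regAbs_ge hη _
  have hvJ : ∫ p in GamR R, gradSq2 v p ≤ J := by
    refine integral_mono (integrableOn_GamR R (continuous_gradSq2 hvC))
      (integrableOn_GamR R (continuous_gradSq2 hu.1)) fun p => ?_
    have h1 := d1_comp hu.1 (contDiff_regAbs hη) (hasDerivAt_regAbs hη) p
    have h2 := d2_comp hu.1 (contDiff_regAbs hη) (hasDerivAt_regAbs hη) p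
    have h3 := regAbs'_sq_le hη (u p)
    simp only [gradSq2_eq, hv, h1, h2]
    nlinarith [sq_nonneg (d1 u p), sq_nonneg (d2 u p)]
  have hvΛ : ∫ p in GamR R, gradSq2 v p ≤ Λ * ∫ p in GamR R, v p ^ 2 :=
    hvJ.trans (hηK.le.trans (mul_le_mul_of_nonneg_left hvI hΛ.le))
  have hvpos : 0 < ∫ p in GamR R, v p ^ 2 := by
    refine lt_of_lt_of_le ?_ hvI
    exact pos_of_mul_pos_right ((integral_gradSq2_nonneg R u).trans_lt hηK) hΛ.le
  set m := √(∫ p in GamR R, v p ^ 2) with hm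
  have hm0 : 0 < m := sqrt_pos.2 hvpos
  have hm2 : m ^ 2 = ∫ p in GamR R, v p ^ 2 := sq_sqrt hvpos.le
  have hlin : ∀ t, HasDerivAt (fun s : ℝ => m⁻¹ * s) (m⁻¹) t := fun t => by
    simpa using (hasDerivAt_id t).const_mul m⁻¹
  have hlc : ContDiff ℝ 1 fun s : ℝ => m⁻¹ * s := by fun_prop
  refine ⟨fun p => m⁻¹ * v p, ⟨hlc.comp hvC, fun p hp => ?_⟩, fun p => ?_, ?_, ?_⟩
  · simp only [hv, hu.2 p hp, regAbs_zero hη, mul_zero]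
  · have := regAbs_nonneg η (u p); positivity
  · simp_rw [mul_pow]
    rw [integral_const_mul, ← hm2]; field_simp
  · have : ∀ p, gradSq2 (fun p => m⁻¹ * v p) p = (m⁻¹) ^ 2 * gradSq2 v p := fun p => by
      rw [gradSq2_eq, gradSq2_eq, d1_comp hvC hlc hlin, d2_comp hvC hlc hlin]; ring
    simp_rw [this]
    rw [integral_const_mul, inv_pow, inv_mul_le_iff₀ (by positivity), hm2]
    linarith

/-! ### A trial function with Rayleigh quotient below `π²` -/

lemma rect_sq {f g h k : ℝ → ℝ} (hf : Continuous f) (hg : Continuous g) (hh : Continuous h)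
    (hk : Continuous k) (a b c d : ℝ) :
    ∫ y in c..d, ∫ x in a..b, (f x * g y + h x * k y) ^ 2 =
      (∫ x in a..b, f x ^ 2) * (∫ y in c..d, g y ^ 2) +
      2 * ((∫ x in a..b, f x * h x) * ∫ y in c..d, g y * k y) +
      (∫ x in a..b, h x ^ 2) * ∫ y in c..d, k y ^ 2 := by
  have ii : ∀ {F : ℝ → ℝ} (_ : Continuous F) (s t : ℝ), IntervalIntegrable F volume s t :=
    fun hF s t => hF.intervalIntegrable s t
  have h1 : ∀ y, ∫ x in a..b, (f x * g y + h x * k y) ^ 2 =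
      (∫ x in a..b, f x ^ 2) * g y ^ 2 + 2 * (∫ x in a..b, f x * h x) * (g y * k y) +
      (∫ x in a..b, h x ^ 2) * k y ^ 2 := by
    intro y
    have : ∀ x, (f x * g y + h x * k y) ^ 2 =
        f x ^ 2 * g y ^ 2 + (f x * h x) * (2 * (g y * k y)) + h x ^ 2 * k y ^ 2 := fun x => by ring
    simp_rw [this]
    rw [intervalIntegral.integral_add (ii (by fun_prop) _ _) (ii (by fun_prop) _ _),
      intervalIntegral.integral_add (ii (by fun_prop) _ _) (ii (by fun_prop) _ _),
      intervalIntegral.integral_mul_const, intervalIntegral.integral_mul_const,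
      intervalIntegral.integral_mul_const]
    ring
  simp_rw [h1]
  rw [intervalIntegral.integral_add (ii (by fun_prop) _ _) (ii (by fun_prop) _ _),
    intervalIntegral.integral_add (ii (by fun_prop) _ _) (ii (by fun_prop) _ _),
    intervalIntegral.integral_const_mul, intervalIntegral.integral_const_mul,
    intervalIntegral.integral_const_mul]
  ring

/-- The mass and the Dirichlet integral of `p(x₁) q(x₂) + q(x₁) p(x₂)` in terms of
one-dimensional integrals over `[-1, 0]`, when `p = 1` and `q = 0` on `[0, ∞)`. -/
lemma trial_integrals {L : ℝ} (hL : 0 < L) {p p' q q' : ℝ → ℝ}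
    (hp : ∀ t, HasDerivAt p (p' t) t) (hp' : Continuous p')
    (hq : ∀ t, HasDerivAt q (q' t) t) (hq' : Continuous q')
    (p1 : p (-1) = 0) (q1 : q (-1) = 0)
    (hp0 : ∀ t, 0 ≤ t → p t = 1 ∧ p' t = 0) (hq0 : ∀ t, 0 ≤ t → q t = 0 ∧ q' t = 0)
    {P P1 a A b d : ℝ} (hP : ∫ t in (-1)..0, p t ^ 2 = P) (hP1 : ∫ t in (-1)..0, p' t ^ 2 = P1)
    (ha : ∫ t in (-1)..0, q t ^ 2 = a) (hA : ∫ t in (-1)..0, q' t ^ 2 = A)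
    (hb : ∫ t in (-1)..0, p t * q t = b) (hd : ∫ t in (-1)..0, p' t * q' t = d) :
    ∃ u, AdmR L u ∧ ∫ z in GamR L, u z ^ 2 = 2 * (P + L) * a + 2 * b ^ 2 ∧
      ∫ z in GamR L, gradSq2 u z = 2 * P1 * a + 2 * (P + L) * A + 4 * d * b := by
  have hpc : Continuous p := continuous_iff_continuousAt.2 fun t => (hp t).continuousAt
  have hqc : Continuous q := continuous_iff_continuousAt.2 fun t => (hq t).continuousAt
  have C1 : ∀ {f f' : ℝ → ℝ}, (∀ t, HasDerivAt f (f' t) t) → Continuous f' → ContDiff ℝ 1 f := by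
    intro f f' hf hf'
    rw [contDiff_one_iff_deriv]
    refine ⟨fun t => (hf t).differentiableAt, ?_⟩
    rwa [show deriv f = f' from funext fun t => (hf t).deriv]
  have hpC := C1 hp hp'
  have hqC := C1 hq hq'
  set u : ℝ × ℝ → ℝ := fun z => p z.1 * q z.2 + q z.1 * p z.2 with hu
  have huC : ContDiff ℝ 1 u :=
    ((hpC.comp contDiff_fst).mul (hqC.comp contDiff_snd)).add
      ((hqC.comp contDiff_fst).mul (hpC.comp contDiff_snd))
  have hd1 : ∀ z, d1 u z = p' z.1 * q z.2 + q' z.1 * p z.2 := fun z =>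
    (hasDerivAt_d1 huC z.1 z.2).unique
      (((hp z.1).mul_const (q z.2)).add ((hq z.1).mul_const (p z.2)))
  have hd2 : ∀ z, d2 u z = p z.1 * q' z.2 + q z.1 * p' z.2 := fun z =>
    (hasDerivAt_d2 huC z.1 z.2).unique
      (((hq z.2).const_mul (p z.1)).add ((hp z.2).const_mul (q z.1)))
  -- one-dimensional integrals over the arm `[0, L]`
  have arm : ∀ {F : ℝ → ℝ} (c : ℝ), (∀ t, 0 ≤ t → F t = c) → ∫ t in 0..L, F t = L * c := by
    intro F c hF
    rw [intervalIntegral.integral_congr (g := fun _ => c) fun t ht => hF t ?_]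
    · simp
    · rw [uIcc_of_le hL.le] at ht; exact ht.1
  have ext : ∀ {F : ℝ → ℝ} (_ : Continuous F) (c : ℝ), (∀ t, 0 ≤ t → F t = c) →
      ∫ t in (-1)..L, F t = (∫ t in (-1)..0, F t) + L * c := by
    intro F hF c h
    rw [← arm c h, intervalIntegral.integral_add_adjacent_intervals (hF.intervalIntegrable _ _)
      (hF.intervalIntegrable _ _)]
  have pp : ∀ t : ℝ, 0 ≤ t → p t ^ 2 = 1 := fun t ht => by simp [hp0 t ht]
  have pp' : ∀ t : ℝ, 0 ≤ t → p' t ^ 2 = 0 := fun t ht => by simp [hp0 t ht]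
  have qq : ∀ t : ℝ, 0 ≤ t → q t ^ 2 = 0 := fun t ht => by simp [hq0 t ht]
  have qq' : ∀ t : ℝ, 0 ≤ t → q' t ^ 2 = 0 := fun t ht => by simp [hq0 t ht]
  have pq : ∀ t : ℝ, 0 ≤ t → p t * q t = 0 := fun t ht => by simp [hq0 t ht]
  have qp : ∀ t : ℝ, 0 ≤ t → q t * p t = 0 := fun t ht => by simp [hq0 t ht]
  have pq' : ∀ t : ℝ, 0 ≤ t → p' t * q' t = 0 := fun t ht => by simp [hq0 t ht]
  have qp' : ∀ t : ℝ, 0 ≤ t → q' t * p' t = 0 := fun t ht => by simp [hq0 t ht]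
  have hb' : ∫ t in (-1)..0, q t * p t = b := by simp_rw [mul_comm, hb]
  have hd' : ∫ t in (-1)..0, q' t * p' t = d := by
    rw [← hd]; congr 1; ext t; ring
  refine ⟨u, ⟨huC, ?_⟩, ?_, ?_⟩
  · rintro ⟨x, y⟩ hz
    obtain ⟨-, hz⟩ := mem_DirB.1 hz
    simp only [hu]
    simp only at hz
    rcases hz with hz | hz
    · rcases min_choice x y with h | h <;> rw [h] at hz <;> simp [hz, p1, q1]
    · have hx : 0 ≤ x := hz ▸ min_le_left x y
      have hy : 0 ≤ y := hz ▸ min_le_right x y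
      simp [hq0 x hx, hq0 y hy]
  · rw [integral_GamR hL (by fun_prop)]
    simp only [hu]
    rw [rect_sq hpc hqc hqc hpc, rect_sq hpc hqc hqc hpc, ext (by fun_prop) 1 pp,
      ext (by fun_prop) 0 pq, ext (by fun_prop) 0 qq, arm 0 qq, arm 0 qp, arm 1 pp,
      hP, ha, hb, hb']
    ring
  · have h1 : ∫ z in GamR L, gradSq2 u z = (∫ z in GamR L, (p' z.1 * q z.2 + q' z.1 * p z.2) ^ 2) +
        ∫ z in GamR L, (p z.1 * q' z.2 + q z.1 * p' z.2) ^ 2 := by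
      rw [← integral_add (integrableOn_GamR L (by fun_prop)) (integrableOn_GamR L (by fun_prop))]
      simp_rw [gradSq2_eq, hd1, hd2]
    rw [h1, integral_GamR hL (by fun_prop), integral_GamR hL (by fun_prop)]
    simp only
    rw [rect_sq hp' hqc hq' hpc, rect_sq hp' hqc hq' hpc, rect_sq hpc hq' hqc hp',
      rect_sq hpc hq' hqc hp', ext (by fun_prop) 1 pp,
      ext (by fun_prop) 0 pq, ext (by fun_prop) 0 qq, ext (by fun_prop) 0 pp',
      ext (by fun_prop) 0 pq', ext (by fun_prop) 0 qq', arm 0 qq, arm 0 qp, arm 1 pp,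
      arm 0 qq', arm 0 qp', arm 0 pp', hP, hP1, ha, hA, hb, hb', hd, hd']
    ring

lemma integral_sin_pi_sq : ∫ t in (-1)..0, sin (π * t) ^ 2 = 1 / 2 := by
  have h : ∀ t, HasDerivAt (fun t => t / 2 - sin (π * t) * cos (π * t) / (2 * π))
      (sin (π * t) ^ 2) t := fun t => by
    have l : HasDerivAt (fun t => π * t) π t := by simpa using (hasDerivAt_id t).const_mul π
    refine (((hasDerivAt_id t).div_const 2).sub
      ((l.sin.mul l.cos).div_const (2 * π))).congr_deriv ?_
    field_simp
    linear_combination -(sin_sq_add_cos_sq (π * t))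
  rw [intervalIntegral.integral_eq_sub_of_hasDerivAt (fun t _ => h t)
    (Continuous.intervalIntegrable (by fun_prop) _ _)]
  simp
  norm_num

lemma integral_cos_pi_sq : ∫ t in (-1)..0, cos (π * t) ^ 2 = 1 / 2 := by
  have h : ∀ t : ℝ, cos (π * t) ^ 2 = 1 - sin (π * t) ^ 2 := fun t => cos_sq' _
  simp_rw [h]
  rw [intervalIntegral.integral_sub (by simp) (Continuous.intervalIntegrable (by fun_prop) _ _),
    integral_sin_pi_sq]
  norm_num

lemma integral_sin_half_sq : ∫ t in (-1)..0, sin (π / 2 * t) ^ 2 = 1 / 2 := by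
  have h : ∀ t, HasDerivAt (fun t => t / 2 - sin (π / 2 * t) * cos (π / 2 * t) / π)
      (sin (π / 2 * t) ^ 2) t := fun t => by
    have l : HasDerivAt (fun t => π / 2 * t) (π / 2) t := by
      simpa using (hasDerivAt_id t).const_mul (π / 2)
    refine (((hasDerivAt_id t).div_const 2).sub
      ((l.sin.mul l.cos).div_const π)).congr_deriv ?_
    field_simp
    linear_combination -(sin_sq_add_cos_sq (π * t / 2))
  rw [intervalIntegral.integral_eq_sub_of_hasDerivAt (fun t _ => h t)
    (Continuous.intervalIntegrable (by fun_prop) _ _)]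
  simp
  norm_num

lemma integral_cos_half_mul_sin :
    ∫ t in (-1)..0, cos (π / 2 * t) * (-sin (π * t)) = 4 / (3 * π) := by
  have h : ∀ t, HasDerivAt (fun t => 4 / (3 * π) * cos (π / 2 * t) ^ 3)
      (cos (π / 2 * t) * (-sin (π * t))) t := fun t => by
    have l : HasDerivAt (fun t => π / 2 * t) (π / 2) t := by
      simpa using (hasDerivAt_id t).const_mul (π / 2)
    refine ((l.cos.pow 3).const_mul (4 / (3 * π))).congr_deriv ?_
    rw [show π * t = 2 * (π / 2 * t) by ring, sin_two_mul]
    field_simp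
    norm_num
    ring
  rw [intervalIntegral.integral_eq_sub_of_hasDerivAt (fun t _ => h t)
    (Continuous.intervalIntegrable (by fun_prop) _ _)]
  simp

/-- The numerical estimate behind `exists_quotient_lt`: the energy excess is at most
`π² / 8 + π² / 25 - (13 / 10)²`, which is negative. -/
lemma trial_estimate {L η P a A b : ℝ} (hL : 0 < L) (hη : 0 < η) (hη1 : η ≤ 1 / 100)
    (hηL : η * (1 + L) = 1 / 100) (hP : P ≤ 1) (hP0 : 0 ≤ P) (ha1 : a ≤ 1 / 2)
    (ha2 : 1 / 2 - 2 * η ≤ a) (hA : A ≤ π ^ 2 / 2) (hb : 4 / (3 * π) - η ≤ b) :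
    2 * (π ^ 2 / 8) * a + 2 * (P + L) * A + 4 * (π ^ 2 / 4 * b) * b <
      π ^ 2 * (2 * (P + L) * a + 2 * b ^ 2) := by
  have hπ1 := pi_gt_d2
  have hπ2 := pi_lt_d2
  have hb' : 13 / 10 ≤ π * b := by
    have h1 := mul_le_mul_of_nonneg_left hb pi_pos.le
    have h2 : π * (4 / (3 * π) - η) = 4 / 3 - π * η := by field_simp
    have h3 : π * η ≤ 1 / 30 := by nlinarith
    linarith
  have hb2 : 169 / 100 ≤ π ^ 2 * b ^ 2 := by nlinarith
  have hPA : (P + L) * (A - π ^ 2 * a) ≤ π ^ 2 / 50 := by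
    have h1 : A - π ^ 2 * a ≤ 2 * η * π ^ 2 := by nlinarith [sq_nonneg π]
    calc (P + L) * (A - π ^ 2 * a) ≤ (P + L) * (2 * η * π ^ 2) :=
          mul_le_mul_of_nonneg_left h1 (by positivity)
      _ ≤ (1 + L) * (2 * η * π ^ 2) := mul_le_mul_of_nonneg_right (by linarith) (by positivity)
      _ = π ^ 2 / 50 := by linear_combination 2 * π ^ 2 * hηL
  have hπsq : π ^ 2 ≤ 993 / 100 := by nlinarith
  have h1 : π ^ 2 * a ≤ π ^ 2 / 2 := by nlinarith [sq_nonneg π]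
  linarith

/-- The first eigenvalue lies strictly below the threshold `π²`. The trial function is
`p(x₁) q(x₂) + q(x₁) p(x₂)` with `p = cos (π x / 2)` and `q` a regularization of `|sin (π x)|` on
`[-1, 0]`, extended by `p = 1` and `q = 0` to `[0, ∞)`. -/
lemma exists_quotient_lt {L : ℝ} (hL : 0 < L) : ∃ r ∈ quotients L, r < π ^ 2 := by
  set η : ℝ := 1 / (100 * (1 + L)) with hηdef
  have hη : 0 < η := by positivity
  have hη1 : η ≤ 1 / 100 := by
    rw [hηdef]; exact one_div_le_one_div_of_le (by norm_num) (by nlinarith)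
  have hηL : η * (1 + L) = 1 / 100 := by rw [hηdef]; field_simp
  have lp : ∀ t, HasDerivAt (fun t => π / 2 * t) (π / 2) t := fun t => by
    simpa using (hasDerivAt_id t).const_mul (π / 2)
  have lq : ∀ t, HasDerivAt (fun t => π * t) π t := fun t => by
    simpa using (hasDerivAt_id t).const_mul π
  set p : ℝ → ℝ := fun t => cos (π / 2 * t) with hpdef
  set p' : ℝ → ℝ := fun t => -(π / 2) * sin (π / 2 * t) with hp'def
  set q : ℝ → ℝ := fun t => regAbs η (sin (π * t)) with hqdef
  set q' : ℝ → ℝ := fun t => regAbs' η (sin (π * t)) * (π * cos (π * t)) with hq'def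
  have hp : ∀ t, HasDerivAt p (p' t) t := fun t => (lp t).cos.congr_deriv (by ring)
  have hq : ∀ t, HasDerivAt q (q' t) t := fun t =>
    ((hasDerivAt_regAbs hη _).comp t (lq t).sin).congr_deriv (by ring)
  have hp'c : Continuous p' := by fun_prop
  have hq'c : Continuous q' := by
    have := continuous_regAbs' hη
    fun_prop
  have hpc : Continuous p := by fun_prop
  have hqc : Continuous q := continuous_iff_continuousAt.2 fun t => (hq t).continuousAt
  have p'0 : p' 0 = 0 := by simp [hp'def]
  have q'0 : q' 0 = 0 := by simp [hq'def, regAbs']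
  have q0 : q 0 = 0 := by simp [hqdef, regAbs_zero hη]
  have q1 : q (-1) = 0 := by simp [hqdef, regAbs_zero hη]
  have p1 : p (-1) = 0 := by simp [hpdef]
  have m1 : min (-1 : ℝ) 0 = -1 := by norm_num
  have cl : ∀ F : ℝ → ℝ, ∫ t in (-1)..0, F (min t 0) = ∫ t in (-1)..0, F t := fun F =>
    intervalIntegral.integral_congr fun t ht => by
      rw [uIcc_of_le (by norm_num)] at ht
      simp only [min_eq_left ht.2]
  have ii : ∀ {F : ℝ → ℝ} (_ : Continuous F), IntervalIntegrable F volume (-1) 0 :=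
    fun hF => hF.intervalIntegrable _ _
  obtain ⟨u, hu, hum, hug⟩ := trial_integrals hL
    (hasDerivAt_clamp_min hp hp'c p'0) (by fun_prop) (hasDerivAt_clamp_min hq hq'c q'0)
    (by fun_prop) (by simp only [m1, p1]) (by simp only [m1, q1])
    (fun t ht => by rw [min_eq_right ht]; exact ⟨by simp [hpdef], p'0⟩)
    (fun t ht => by rw [min_eq_right ht]; exact ⟨q0, q'0⟩)
    (cl fun t => p t ^ 2) (cl fun t => p' t ^ 2) (cl fun t => q t ^ 2) (cl fun t => q' t ^ 2)
    (cl fun t => p t * q t) (cl fun t => p' t * q' t)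
  have hd : ∫ t in (-1)..0, p' t * q' t = π ^ 2 / 4 * ∫ t in (-1)..0, p t * q t := by
    have hp2 : ∀ t, HasDerivAt p' (-(π ^ 2 / 4) * p t) t := fun t =>
      ((lp t).sin.const_mul (-(π / 2))).congr_deriv (by simp only [hpdef]; ring)
    have h := by_parts_1d hq hq'c hp2 (by fun_prop) (a := -1) (b := 0) 1
      (by rw [q1, zero_mul]) (by rw [q0, zero_mul])
    rw [← intervalIntegral.integral_const_mul]
    calc ∫ t in (-1)..0, p' t * q' t = ∫ t in (-1)..0, q' t * (p' t * 1) := by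
          congr 1; ext t; ring
      _ = _ := h
      _ = _ := by rw [← intervalIntegral.integral_neg]; congr 1; ext t; ring
  have hP : ∫ t in (-1)..0, p t ^ 2 ≤ 1 := by
    have := intervalIntegral.integral_mono_on (a := -1) (b := 0) (μ := volume)
      (f := fun t => p t ^ 2) (g := fun _ => (1 : ℝ)) (by norm_num) (ii (by fun_prop)) (by simp)
      fun t _ => cos_sq_le_one _
    simpa using this
  have hP0 : 0 ≤ ∫ t in (-1)..0, p t ^ 2 :=
    intervalIntegral.integral_nonneg (by norm_num) fun t _ => sq_nonneg _
  have hP1 : ∫ t in (-1)..0, p' t ^ 2 = π ^ 2 / 8 := by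
    simp only [hp'def, mul_pow]
    rw [intervalIntegral.integral_const_mul, integral_sin_half_sq]; ring
  have ha1 : ∫ t in (-1)..0, q t ^ 2 ≤ 1 / 2 := by
    rw [← integral_sin_pi_sq]
    refine intervalIntegral.integral_mono_on (by norm_num) (ii (by fun_prop)) (ii (by fun_prop))
      fun t _ => ?_
    rw [← sq_abs (sin (π * t))]
    exact pow_le_pow_left₀ (regAbs_nonneg _ _) (regAbs_le hη _) 2
  have ha2 : 1 / 2 - 2 * η ≤ ∫ t in (-1)..0, q t ^ 2 := by
    have : ∫ t in (-1)..0, (sin (π * t) ^ 2 - 2 * η) = 1 / 2 - 2 * η := by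
      rw [intervalIntegral.integral_sub (ii (by fun_prop)) (by simp), integral_sin_pi_sq]; simp
    rw [← this]
    refine intervalIntegral.integral_mono_on (by norm_num) (ii (by fun_prop)) (ii (by fun_prop))
      fun t _ => ?_
    have h1 := sq_regAbs_ge hη (sin (π * t))
    have h2 := abs_sin_le_one (π * t)
    have h3 := mul_le_mul_of_nonneg_left h2 (by positivity : 0 ≤ 2 * η)
    simp only [hqdef]; linarith
  have hA : ∫ t in (-1)..0, q' t ^ 2 ≤ π ^ 2 / 2 := by
    have : ∫ t in (-1)..0, π ^ 2 * cos (π * t) ^ 2 = π ^ 2 / 2 := by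
      rw [intervalIntegral.integral_const_mul, integral_cos_pi_sq]; ring
    rw [← this]
    refine intervalIntegral.integral_mono_on (by norm_num) (ii (by fun_prop)) (ii (by fun_prop))
      fun t _ => ?_
    simp only [hq'def, mul_pow]
    exact mul_le_of_le_one_left (by positivity) (regAbs'_sq_le hη _)
  have hb : 4 / (3 * π) - η ≤ ∫ t in (-1)..0, p t * q t := by
    have : ∫ t in (-1)..0, (cos (π / 2 * t) * (-sin (π * t)) - η) = 4 / (3 * π) - η := by
      rw [intervalIntegral.integral_sub (ii (by fun_prop)) (by simp), integral_cos_half_mul_sin]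
      simp
    rw [← this]
    refine intervalIntegral.integral_mono_on (by norm_num) (ii (by fun_prop)) (ii (by fun_prop))
      fun t ht => ?_
    have h0 : 0 ≤ cos (π / 2 * t) := cos_nonneg_of_mem_Icc
      ⟨by nlinarith [pi_pos, ht.1], by nlinarith [pi_pos, ht.2]⟩
    have h1 := cos_le_one (π / 2 * t)
    have h2 := le_regAbs η (sin (π * t))
    have h3 := neg_le_abs (sin (π * t))
    have h4 := mul_le_mul_of_nonneg_left (h2.trans' (sub_le_sub_right h3 η)) h0
    simp only [hpdef, hqdef]
    nlinarith
  rw [hd] at hug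
  rw [hP1] at hug
  set P := ∫ t in (-1)..0, p t ^ 2
  set a := ∫ t in (-1)..0, q t ^ 2
  set A := ∫ t in (-1)..0, q' t ^ 2
  set b := ∫ t in (-1)..0, p t * q t
  have hQ : ∫ z in GamR L, gradSq2 u z < π ^ 2 * ∫ z in GamR L, u z ^ 2 := by
    rw [hug, hum]
    exact trial_estimate hL hη hη1 hηL hP hP0 ha1 ha2 hA hb
  have hpos : 0 < ∫ z in GamR L, u z ^ 2 :=
    pos_of_mul_pos_right ((integral_gradSq2_nonneg L u).trans_lt hQ) (by positivity)
  exact ⟨_, ⟨u, hu, hpos.ne', rfl⟩, (div_lt_iff₀ hpos).2 hQ⟩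

/-! ### Testing against an explicit function -/

/-- Integration by parts against the product `G(x₁) G(x₂)`, where `G'` vanishes at the Neumann
end. -/
lemma by_parts_test {L : ℝ} (hL : 0 < L) {u : ℝ × ℝ → ℝ} (hu : AdmR L u) {G G1 G2 : ℝ → ℝ}
    (hG : ∀ t, HasDerivAt G (G1 t) t) (hG1 : ∀ t, HasDerivAt G1 (G2 t) t) (hG2 : Continuous G2)
    (hGL : G1 L = 0) :
    ∫ p in GamR L, (d1 u p * (G1 p.1 * G p.2) + d2 u p * (G p.1 * G1 p.2)) =
      -∫ p in GamR L, u p * (G2 p.1 * G p.2 + G p.1 * G2 p.2) := by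
  have hGc : Continuous G := continuous_iff_continuousAt.2 fun t => (hG t).continuousAt
  have hG1c : Continuous G1 := continuous_iff_continuousAt.2 fun t => (hG1 t).continuousAt
  have huc := hu.1.continuous
  have c1 := continuous_d1 hu.1
  have c2 := continuous_d2 hu.1
  have e1 := by_parts_GamR hL hu hG1 hG2 hGc hGL
  have e2 := by_parts_GamR hL hu.swap hG1 hG2 hGc hGL
  rw [← integral_GamR_swap, ← integral_GamR_swap (fun p => u p.swap * _)] at e2
  simp only [d1_swap hu.1, Prod.swap_swap, Prod.fst_swap, Prod.snd_swap] at e2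
  rw [integral_add (integrableOn_GamR L (by fun_prop)) (integrableOn_GamR L (by fun_prop)), e1]
  have e3 : ∫ p in GamR L, d2 u p * (G p.1 * G1 p.2) =
      -∫ p in GamR L, u p * (G p.1 * G2 p.2) := by
    simpa only [mul_comm (G _)] using e2
  rw [e3, ← neg_add, ← integral_add (integrableOn_GamR L (by fun_prop))
    (integrableOn_GamR L (by fun_prop))]
  simp only [mul_add]

/-- There is a function `f`, positive almost everywhere on `Γ_R`, such that `∫ f u` over `Γ_L` is
controlled by the energy excess of `u`. With `φ = G(x₁) G(x₂)`, `f = -Δφ - λ φ`, and the bound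
is the expanded form of the nonnegativity of the energy excess of `u - s φ`. -/
lemma exists_test {R L : ℝ} (hR : 0 < R) (hRL : R < L) (hlam : lamR L < π ^ 2) :
    ∃ (f : ℝ × ℝ → ℝ) (C : ℝ), Continuous f ∧ 0 ≤ C ∧
      (∀ p ∈ GamR R, p.1 ≠ 0 → p.2 ≠ 0 → 0 < f p) ∧
      ∀ u, AdmR L u → ∀ s > 0, ∫ p in GamR L, f p * u p ≤
        ((∫ p in GamR L, gradSq2 u p) - lamR L * ∫ p in GamR L, u p ^ 2) / (2 * s) +
          s * C / 2 := by
  obtain ⟨G, G1, G2, hG, hG1, hG2, Gm1, G0, hG1L, hneg, hpos⟩ := exists_testG hR hRL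
  have hGc : Continuous G := continuous_iff_continuousAt.2 fun t => (hG t).continuousAt
  have hG1c : Continuous G1 := continuous_iff_continuousAt.2 fun t => (hG1 t).continuousAt
  have hL : 0 < L := hR.trans hRL
  set lam := lamR L with hlamdef
  have hlam0 : 0 ≤ lam := lamR_nonneg L
  have hGC : ContDiff ℝ 1 G := by
    rw [contDiff_one_iff_deriv]
    refine ⟨fun t => (hG t).differentiableAt, ?_⟩
    rwa [show deriv G = G1 from funext fun t => (hG t).deriv]
  set φ : ℝ × ℝ → ℝ := fun p => G p.1 * G p.2 with hφ
  have hφC : ContDiff ℝ 1 φ := (hGC.comp contDiff_fst).mul (hGC.comp contDiff_snd)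
  have hφA : AdmR L φ := by
    refine ⟨hφC, ?_⟩
    rintro ⟨x, y⟩ hz
    obtain ⟨-, hz⟩ := mem_DirB.1 hz
    simp only [hφ]
    simp only at hz
    rcases hz with hz | hz <;> rcases min_choice x y with h | h <;> rw [h] at hz <;>
      simp [hz, G0, Gm1]
  have hd1 : ∀ p, d1 φ p = G1 p.1 * G p.2 := fun p =>
    (hasDerivAt_d1 hφC p.1 p.2).unique ((hG p.1).mul_const (G p.2))
  have hd2 : ∀ p, d2 φ p = G p.1 * G1 p.2 := fun p =>
    (hasDerivAt_d2 hφC p.1 p.2).unique ((hG p.2).const_mul (G p.1))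
  refine ⟨fun p => -(G2 p.1 * G p.2 + G p.1 * G2 p.2) - lam * (G p.1 * G p.2),
    (∫ p in GamR L, gradSq2 φ p) - lam * ∫ p in GamR L, φ p ^ 2, by fun_prop,
    sub_nonneg.2 (lamR_mul_le hφA), ?_, ?_⟩
  · rintro ⟨x, y⟩ hp hx hy
    obtain ⟨⟨h1, h2⟩, hb1, hb2⟩ := hp
    simp only at h1 h2 hb1 hb2 hx hy ⊢
    have hx1 : -1 < x := h1.trans_le (min_le_left _ _)
    have hy1 : -1 < y := h1.trans_le (min_le_right _ _)
    have hxR : x < R := by linarith [(abs_lt.1 hb1).2]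
    have hyR : y < R := by linarith [(abs_lt.1 hb2).2]
    rcases lt_or_gt_of_ne hx with hx | hx <;> rcases lt_or_gt_of_ne hy with hy | hy
    · obtain ⟨a1, a2⟩ := hneg x ⟨hx1, hx⟩
      obtain ⟨b1, b2⟩ := hneg y ⟨hy1, hy⟩
      rw [a2, b2]
      have : 0 < (2 * π ^ 2 - lam) * (G x * G y) :=
        mul_pos (by linarith [sq_nonneg π]) (mul_pos a1 b1)
      linarith
    · obtain ⟨a1, a2⟩ := hneg x ⟨hx1, hx⟩
      obtain ⟨b1, b2⟩ := hpos y ⟨hy, hyR⟩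
      rw [a2, b2]
      have : 0 < (3 * π ^ 2 + lam) * (G x * -G y) :=
        mul_pos (by positivity) (mul_pos a1 (neg_pos.2 b1))
      linarith
    · obtain ⟨a1, a2⟩ := hpos x ⟨hx, hxR⟩
      obtain ⟨b1, b2⟩ := hneg y ⟨hy1, hy⟩
      rw [a2, b2]
      have : 0 < (3 * π ^ 2 + lam) * (-G x * G y) :=
        mul_pos (by positivity) (mul_pos (neg_pos.2 a1) b1)
      linarith
    · exact absurd h2 (not_lt.2 (le_min hx.le hy.le))
  · intro u hu s hs
    have huC := hu.1
    have huc := huC.continuous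
    have c1 := continuous_d1 huC
    have c2 := continuous_d2 huC
    have hw : AdmR L fun p => u p - s * φ p := by
      refine ⟨huC.sub (contDiff_const.mul hφC), fun p hp => ?_⟩
      simp only [hu.2 p hp, hφA.2 p hp, mul_zero, sub_zero]
    have hw1 : ∀ p, d1 (fun p => u p - s * φ p) p = d1 u p - s * (G1 p.1 * G p.2) := fun p => by
      rw [← hd1]
      exact (hasDerivAt_d1 hw.1 p.1 p.2).unique
        ((hasDerivAt_d1 huC p.1 p.2).sub ((hasDerivAt_d1 hφC p.1 p.2).const_mul s))
    have hw2 : ∀ p, d2 (fun p => u p - s * φ p) p = d2 u p - s * (G p.1 * G1 p.2) := fun p => by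
      rw [← hd2]
      exact (hasDerivAt_d2 hw.1 p.1 p.2).unique
        ((hasDerivAt_d2 huC p.1 p.2).sub ((hasDerivAt_d2 hφC p.1 p.2).const_mul s))
    have key := lamR_mul_le hw
    have ig : ∀ {F : ℝ × ℝ → ℝ}, Continuous F → IntegrableOn F (GamR L) :=
      fun hF => integrableOn_GamR L hF
    have cg := continuous_gradSq2 huC
    have cφ := continuous_gradSq2 hφC
    have e1 : ∫ p in GamR L, gradSq2 (fun p => u p - s * φ p) p =
        (∫ p in GamR L, gradSq2 u p) - 2 * s *
          (∫ p in GamR L, (d1 u p * (G1 p.1 * G p.2) + d2 u p * (G p.1 * G1 p.2))) +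
          s ^ 2 * ∫ p in GamR L, gradSq2 φ p := by
      rw [← integral_const_mul, ← integral_const_mul, ← integral_sub (ig cg) (ig (by fun_prop)),
        ← integral_add (ig (by fun_prop)) (ig (by fun_prop))]
      congr 1; ext p
      rw [gradSq2_eq, gradSq2_eq, gradSq2_eq, hw1, hw2, hd1, hd2]; ring
    have e2 : ∫ p in GamR L, (u p - s * φ p) ^ 2 =
        (∫ p in GamR L, u p ^ 2) - 2 * s * (∫ p in GamR L, u p * (G p.1 * G p.2)) +
          s ^ 2 * ∫ p in GamR L, φ p ^ 2 := by
      rw [← integral_const_mul, ← integral_const_mul,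
        ← integral_sub (ig (by fun_prop)) (ig (by fun_prop)),
        ← integral_add (ig (by fun_prop)) (ig (by fun_prop))]
      congr 1; ext p
      simp only [hφ]; ring
    have e3 : ∫ p in GamR L,
        (-(G2 p.1 * G p.2 + G p.1 * G2 p.2) - lam * (G p.1 * G p.2)) * u p =
        (-∫ p in GamR L, u p * (G2 p.1 * G p.2 + G p.1 * G2 p.2)) -
          lam * ∫ p in GamR L, u p * (G p.1 * G p.2) := by
      rw [← integral_const_mul, ← integral_neg,
        ← integral_sub (ig (by fun_prop)) (ig (by fun_prop))]
      congr 1; ext p; ring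
    rw [e1, e2, by_parts_test hL hu hG hG1 hG2 hG1L] at key
    rw [e3]
    set X := -∫ p in GamR L, u p * (G2 p.1 * G p.2 + G p.1 * G2 p.2)
    set Y := ∫ p in GamR L, u p * (G p.1 * G p.2)
    have h2s : 0 < 2 * s := by positivity
    rw [← sub_le_iff_le_add, le_div_iff₀ h2s]
    nlinarith

/-! ### Concentration -/

lemma volume_GamR_lt_top (R : ℝ) : volume (GamR R) < ⊤ := by
  have h := integrableOn_GamR R (F := fun _ => (1 : ℝ)) continuous_const
  simpa [integrableOn_const_iff] using h

/-- A continuous function that is positive almost everywhere on `Γ_R` is bounded below by a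
positive constant outside a set of small measure. -/
lemma exists_small_sublevel {R : ℝ} {f : ℝ × ℝ → ℝ} (hf : Continuous f)
    (hpos : ∀ᵐ p ∂volume.restrict (GamR R), 0 < f p) {δ : ℝ} (hδ : 0 < δ) :
    ∃ τ > 0, (volume.restrict (GamR R)).real {p | f p < τ} ≤ δ := by
  set μ := volume.restrict (GamR R)
  have : IsFiniteMeasure μ := ⟨by simpa [μ] using volume_GamR_lt_top R⟩
  have hm : ∀ n : ℕ, MeasurableSet {p | f p < 1 / ((n : ℝ) + 1)} := fun n =>
    (isOpen_lt hf continuous_const).measurableSet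
  have h := tendsto_measure_iInter_atTop (μ := μ) (s := fun n : ℕ => {p | f p < 1 / ((n : ℝ) + 1)})
    (fun n => (hm n).nullMeasurableSet)
    (fun m n hmn p (hp : f p < _) => hp.trans_le (one_div_le_one_div_of_le (by positivity)
      (by gcongr)))
    ⟨0, measure_ne_top _ _⟩
  have h0 : μ (⋂ n : ℕ, {p | f p < 1 / ((n : ℝ) + 1)}) = 0 := by
    refine measure_mono_null (fun p hp => ?_) hpos
    intro (hfp : 0 < f p)
    obtain ⟨n, hn⟩ := exists_nat_one_div_lt hfp
    exact lt_asymm hn (mem_iInter.1 hp n)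
  rw [h0] at h
  obtain ⟨n, hn⟩ := (h.eventually_lt_const (ENNReal.ofReal_pos.2 hδ)).exists
  refine ⟨1 / ((n : ℝ) + 1), by positivity, ?_⟩
  exact ENNReal.toReal_le_of_le_ofReal hδ.le hn.le

/-- Splitting according to the sizes of `u` and `f`. -/
lemma sq_le_split {u f β τ : ℝ} (hu : 0 ≤ u) (hf : 0 < f) (hβ : 0 < β) (hτ : 0 < τ) :
    u ^ 2 ≤ β ^ 2 * u ^ 4 + 1 / (4 * β ^ 2) * (if f < τ then 1 else 0) +
      1 / (τ * β) * (f * u) := by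
  have h3 : 0 ≤ 1 / (τ * β) * (f * u) := by positivity
  split_ifs with h
  · have h1 : 1 / (4 * β ^ 2) = (1 / (2 * β)) ^ 2 := by field_simp; norm_num
    have h2 : β * u ^ 2 * (1 / (2 * β)) = u ^ 2 / 2 := by field_simp
    nlinarith [sq_nonneg (β * u ^ 2 - 1 / (2 * β))]
  · push Not at h
    rcases le_total (β * u) 1 with hb | hb
    · have h4 : u ^ 2 ≤ 1 / (τ * β) * (f * u) := by
        rw [one_div, le_inv_mul_iff₀ (by positivity)]
        calc τ * β * u ^ 2 = (β * u) * (τ * u) := by ring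
          _ ≤ 1 * (τ * u) := by gcongr
          _ ≤ f * u := by rw [one_mul]; gcongr
      have : 0 ≤ β ^ 2 * u ^ 4 := by positivity
      linarith
    · have : u ^ 2 ≤ β ^ 2 * u ^ 4 := by
        have h5 : 1 ≤ (β * u) ^ 2 := one_le_pow₀ hb
        nlinarith [sq_nonneg u]
      linarith

lemma sq_integral_le_split {R : ℝ} {u f : ℝ × ℝ → ℝ} (huc : Continuous u) (hu : ∀ p, 0 ≤ u p)
    (hf : Continuous f) (hpos : ∀ᵐ p ∂volume.restrict (GamR R), 0 < f p) {β τ : ℝ} (hβ : 0 < β)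
    (hτ : 0 < τ) :
    ∫ p in GamR R, u p ^ 2 ≤ β ^ 2 * (∫ p in GamR R, u p ^ 4) +
      1 / (4 * β ^ 2) * (volume.restrict (GamR R)).real {p | f p < τ} +
      1 / (τ * β) * ∫ p in GamR R, f p * u p := by
  have hm : MeasurableSet {p | f p < τ} := (isOpen_lt hf continuous_const).measurableSet
  have : IsFiniteMeasure (volume.restrict (GamR R)) := ⟨by simpa using volume_GamR_lt_top R⟩
  have i1 : Integrable ({p | f p < τ}.indicator (1 : ℝ × ℝ → ℝ)) (volume.restrict (GamR R)) :=
    (integrable_const (1 : ℝ)).indicator hm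
  have i2 : Integrable (fun p => β ^ 2 * u p ^ 4) (volume.restrict (GamR R)) :=
    integrableOn_GamR R (by fun_prop)
  have i3 : Integrable (fun p => 1 / (τ * β) * (f p * u p)) (volume.restrict (GamR R)) :=
    integrableOn_GamR R (by fun_prop)
  have i4 : Integrable (fun p => β ^ 2 * u p ^ 4 +
      1 / (4 * β ^ 2) * {p | f p < τ}.indicator (1 : ℝ × ℝ → ℝ) p) (volume.restrict (GamR R)) :=
    i2.add (i1.const_mul _)
  rw [← integral_indicator_one hm, ← integral_const_mul, ← integral_const_mul,
    ← integral_const_mul, ← integral_add i2 (i1.const_mul _),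
    ← integral_add i4 i3]
  refine integral_mono_ae (integrableOn_GamR R (by fun_prop)) (i4.add i3) ?_
  filter_upwards [hpos] with p hp
  have := sq_le_split (hu p) hp hβ hτ
  simpa [indicator_apply] using this

/-! ### Strict monotonicity -/

lemma ae_GamR_pos {R : ℝ} {f : ℝ × ℝ → ℝ}
    (hf : ∀ p ∈ GamR R, p.1 ≠ 0 → p.2 ≠ 0 → 0 < f p) :
    ∀ᵐ p ∂volume.restrict (GamR R), 0 < f p := by
  rw [ae_restrict_iff' (measurableSet_GamR R)]
  have h1 : ∀ᵐ p : ℝ × ℝ, p.1 ≠ 0 := measure_eq_zero_iff_ae_notMem.1 (line_null_fst 0)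
  have h2 : ∀ᵐ p : ℝ × ℝ, p.2 ≠ 0 := measure_eq_zero_iff_ae_notMem.1 (line_null_snd 0)
  filter_upwards [h1, h2] with p h1 h2 hp using hf p hp h1 h2

lemma lamR_lt {R L : ℝ} (hR : 0 < R) (hRL : R < L) : lamR R < lamR L := by
  by_contra hcon
  push Not at hcon
  have hL : 0 < L := hR.trans hRL
  obtain ⟨r, hr, hrπ⟩ := exists_quotient_lt hL
  have hlam : lamR L < π ^ 2 :=
    (csInf_le ⟨0, fun _ h => quotients_nonneg h⟩ hr).trans_lt hrπ
  obtain ⟨f, C, hf, hC, hfpos, hfu⟩ := exists_test hR hRL hlam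
  have hae := ae_GamR_pos hfpos
  have hlam0 := lamR_nonneg L
  set lam := lamR L with hlamdef
  set κ := 1 / (π ^ 2 - lam) with hκdef
  have hgap : 0 < π ^ 2 - lam := sub_pos.2 hlam
  have hκ : 0 < κ := by positivity
  set F := ∫ p in GamR L, f p ^ 2 with hF
  have hF0 : 0 ≤ F := integral_sq_nonneg L f
  set K := 2 * (L + 1) * (lam + 1) ^ 2 with hKdef
  have hK : 1 ≤ K := by
    have : 1 ≤ (lam + 1) ^ 2 := one_le_pow₀ (by linarith)
    nlinarith
  set β := 1 / (4 * K) with hβdef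
  have hβ : 0 < β := by positivity
  have hβK : β ^ 2 * K ≤ 1 / 4 := by
    have h1 : β * K = 1 / 4 := by rw [hβdef]; field_simp
    have h2 : β ≤ 1 := by
      rw [hβdef, div_le_one (by positivity)]; linarith
    nlinarith
  obtain ⟨τ, hτ, hV⟩ := exists_small_sublevel hf hae (δ := β ^ 2) (by positivity)
  set s := τ * β / (4 * (C + F + 1)) with hsdef
  have hs : 0 < s := by positivity
  set ε := min (min 1 (s * (τ * β) / (8 * (1 + κ)))) (1 / (16 * (1 + κ))) with hεdef
  have hε : 0 < ε := by positivity
  have hε1 : ε ≤ 1 := (min_le_left _ _).trans (min_le_left _ _)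
  have hε2 : ε ≤ s * (τ * β) / (8 * (1 + κ)) := (min_le_left _ _).trans (min_le_right _ _)
  have hε3 : ε ≤ 1 / (16 * (1 + κ)) := min_le_right _ _
  obtain ⟨u, hu, hu0, hu1, hug⟩ := exists_near_min ⟨r, hr⟩ (show lamR L < lam + ε by linarith)
  have huc := hu.1.continuous
  have hsub := GamR_mono hRL.le
  have mono : ∀ {g : ℝ × ℝ → ℝ}, Continuous g → (∀ p, 0 ≤ g p) →
      ∫ p in GamR R, g p ≤ ∫ p in GamR L, g p := fun hg hg0 =>
    setIntegral_mono_set (integrableOn_GamR L hg) (Filter.Eventually.of_forall hg0)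
      hsub.eventuallyLE
  -- almost all of the mass lies in the shorter guide
  set m := 1 - ∫ p in GamR R, u p ^ 2 with hm
  have hmκ : m ≤ κ * ε := by
    have h1 := arms_poincare hR hRL hu
    rw [hu1, ← hm] at h1
    have h2 := lamR_mul_le (hu.mono hRL.le)
    have h3 := mul_le_mul_of_nonneg_right hcon (integral_sq_nonneg R u)
    have h4 : (π ^ 2 - lam) * m ≤ ε := by
      have : ∫ p in GamR R, u p ^ 2 = 1 - m := by rw [hm]; ring
      rw [this] at h2 h3
      nlinarith
    rw [hκdef, one_div, le_inv_mul_iff₀ hgap]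
    exact h4
  -- the energy excess of `u` controls `∫ f u` over the shorter guide
  have hfuR : ∫ p in GamR R, f p * u p ≤ s * (C + F) / 2 + (1 + κ) * ε / (2 * s) := by
    have h1 := mono (g := fun p => f p * u p + (s / 2 * f p ^ 2 + 1 / (2 * s) * u p ^ 2))
      (by fun_prop) fun p => by
        have : f p * u p + (s / 2 * f p ^ 2 + 1 / (2 * s) * u p ^ 2) =
            1 / (2 * s) * (s * f p + u p) ^ 2 := by field_simp; ring
        rw [this]; positivity
    have expand : ∀ M, ∫ p in GamR M, (f p * u p + (s / 2 * f p ^ 2 + 1 / (2 * s) * u p ^ 2)) =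
        (∫ p in GamR M, f p * u p) + (s / 2 * (∫ p in GamR M, f p ^ 2) +
          1 / (2 * s) * ∫ p in GamR M, u p ^ 2) := by
      intro M
      rw [integral_add (integrableOn_GamR M (by fun_prop)) (integrableOn_GamR M (by fun_prop)),
        integral_add (integrableOn_GamR M (by fun_prop)) (integrableOn_GamR M (by fun_prop)),
        integral_const_mul, integral_const_mul]
    rw [expand, expand, hu1, ← hF] at h1
    have h2 := hfu u hu s hs
    rw [hu1] at h2
    have h3 : ((∫ p in GamR L, gradSq2 u p) - lam * 1) / (2 * s) ≤ ε / (2 * s) := by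
      gcongr; linarith
    have h4 : 1 / (2 * s) * m ≤ 1 / (2 * s) * (κ * ε) := by gcongr
    have h5 : 0 ≤ s / 2 * ∫ p in GamR R, f p ^ 2 :=
      mul_nonneg (by positivity) (integral_sq_nonneg R f)
    have h6 : (1 + κ) * ε / (2 * s) = ε / (2 * s) + 1 / (2 * s) * (κ * ε) := by ring
    have h7 : 1 / (2 * s) * m = 1 / (2 * s) * 1 - 1 / (2 * s) * ∫ p in GamR R, u p ^ 2 := by
      rw [hm]; ring
    linarith
  have hsplit := sq_integral_le_split huc hu0 hf hae hβ hτ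
  have hfour : β ^ 2 * (∫ p in GamR R, u p ^ 4) ≤ 1 / 4 := by
    have h1 := mono (g := fun p => u p ^ 4) (by fun_prop) fun p => by positivity
    have h2 := GamR_fourth hL hu
    have h3 : (∫ p in GamR L, gradSq2 u p) ^ 2 ≤ (lam + 1) ^ 2 :=
      pow_le_pow_left₀ (integral_gradSq2_nonneg L u) (by linarith) 2
    have h4 : ∫ p in GamR R, u p ^ 4 ≤ K :=
      h1.trans (h2.trans (mul_le_mul_of_nonneg_left h3 (by positivity)))
    exact (mul_le_mul_of_nonneg_left h4 (by positivity)).trans hβK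
  have hvol : 1 / (4 * β ^ 2) * (volume.restrict (GamR R)).real {p | f p < τ} ≤ 1 / 4 := by
    refine (mul_le_mul_of_nonneg_left hV (by positivity)).trans_eq ?_
    field_simp
  have hlast : 1 / (τ * β) * ∫ p in GamR R, f p * u p ≤ 3 / 16 := by
    have h1 : s * (C + F) / 2 ≤ τ * β * (1 / 8) := by
      have : s * (C + F + 1) = τ * β / 4 := by rw [hsdef]; field_simp
      linarith
    have h2 : (1 + κ) * ε / (2 * s) ≤ τ * β * (1 / 16) := by
      rw [div_le_iff₀ (by positivity)]
      rw [le_div_iff₀ (by positivity)] at hε2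
      linarith
    rw [one_div, inv_mul_le_iff₀ (by positivity)]
    linarith
  have hm16 : m ≤ 1 / 16 := by
    rw [le_div_iff₀ (by positivity)] at hε3
    linarith
  linarith

/-- (2.14): the function `R ↦ λ₁(Γ_R)` is strictly increasing
on `(0,∞)`. -/
theorem lamR_strictMonoOn : StrictMonoOn lamR (Set.Ioi 0) := by
  intro R hR L _ hRL
  exact lamR_lt hR hRL
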